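/- arXiv:1504.05405 — 5 statements merged into one kernel-verified Lean document; each statement's English description precedes it below -/
import Mathlib

section
/- Criterion for existence of an open Lipschitz surface: for every d ≥ 1, α ∈ [0,1), η ∈ {−1,0,+1}^d, p ∈ [0,1], every x̄ ∈ ℤ^d and every h ∈ ℕ, one has P_p(F^{α,d}_η(x̄) − ⌊α Σ_{i=1}^d η_i x̄_i⌋ ≥ h) ≤ E_p[|𝓛^{α,d}_η(h−2)|]. In particular, if lim_{h→∞} E_p[|𝓛^{α,d}_η(h)|] = 0, then P_p(LIP^{α,d}_η) = 1. -/
open MeasureTheory Filter ENNReal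

/-- Sites of `ℤ^{d+1}`. -/
abbrev Site (d : ℕ) := Fin (d + 1) → ℤ

/-- Site-percolation configurations on `ℤ^{d+1}`: a site is open iff its value is `true`. -/
abbrev Config (d : ℕ) := Site d → Bool

/-- `P` is the i.i.d. Bernoulli(`p`) product measure on `{0,1}^ι`: it is a probability
measure whose cylinder events have the correct product probabilities. -/
def IsBernoulli {ι : Type*} (p : ℝ) (P : Measure (ι → Bool)) : Prop :=
  IsProbabilityMeasure P ∧
    ∀ (s : Finset ι) (f : ι → Bool),
      P {ω | ∀ x ∈ s, ω x = f x} =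
        ∏ x ∈ s, (if f x then ENNReal.ofReal p else ENNReal.ofReal (1 - p))

/-- A function `F : ℤ^d → ℤ` is Lipschitz: `‖x − y‖₁ = 1 → |F x − F y| ≤ 1`. -/
def IsLipschitzFn {d : ℕ} (F : (Fin d → ℤ) → ℤ) : Prop :=
  ∀ x y : Fin d → ℤ, (∑ i, |x i - y i|) = 1 → |F x - F y| ≤ 1

/-- Height `⌊α ∑ᵢ ηᵢ xᵢ⌋` of the tilted plane `L^{α,d}_η` above `x ∈ ℤ^d`. -/
noncomputable def planeHt (α : ℝ) {d : ℕ} (η x : Fin d → ℤ) : ℤ :=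
  ⌊α * ∑ i, (η i : ℝ) * (x i : ℝ)⌋

/-- `η ∈ {-1,0,1}^d`. -/
def IsSign {d : ℕ} (η : Fin d → ℤ) : Prop := ∀ i, η i = -1 ∨ η i = 0 ∨ η i = 1

/-- The event `LIP^{α,d}_η` that there is an open Lipschitz surface lying (strictly) above
the tilted plane `L^{α,d}_η`. -/
def LIP (α : ℝ) {d : ℕ} (η : Fin d → ℤ) : Set (Config d) :=
  {ω | ∃ F : (Fin d → ℤ) → ℤ, IsLipschitzFn F ∧
    ∀ x : Fin d → ℤ, ω (Fin.snoc x (F x)) = true ∧ planeHt α η x < F x}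

/-- `pc` is the critical probability `p_L(α,d,η)` of Lipschitz percolation above the tilted
plane `L^{α,d}_η`: `pc ∈ (0,1)`, for `p` below it there is `P_p`-a.s. no open Lipschitz
surface above the plane, and for `p` above it there `P_p`-a.s. is one.
(Here `P p` is the Bernoulli(`p`) product measure on `{0,1}^{ℤ^{d+1}}`.) -/
def IsCriticalProb {d : ℕ} (P : ℝ → Measure (Config d)) (α : ℝ) (η : Fin d → ℤ)
    (pc : ℝ) : Prop :=
  pc ∈ Set.Ioo (0 : ℝ) 1 ∧
    (∀ p, 0 ≤ p → p < pc → P p (LIP α η) = 0) ∧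
    (∀ p, pc < p → p ≤ 1 → P p (LIP α η) = 1)

/-- The canonical direction vector `η ∈ {-1,0,1}^d` with `k` entries equal to `1`; the
critical probability `p_L(α,d,η)` depends on `η` only through `k = ‖η‖₁`, and
`p_L(α,d,k)` denotes the common value. -/
def etaK (d k : ℕ) : Fin d → ℤ := fun i => if (i : ℕ) < k then 1 else 0

/-- The standard basis vector `e_i` of `ℤ^{d+1}`. -/
def eVec {d : ℕ} (i : Fin (d + 1)) : Site d := Pi.single i 1

/-- There is an admissible λ-path from `x` to `y` with respect to the configuration `ω`:
a finite sequence of distinct sites starting at `x` and ending at `y` whose steps lie in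
`{e_{d+1}} ∪ {−e_{d+1} ± e_j : j = 1,…,d}`, and such that the target of every
upward step (a step `e_{d+1}`) is a closed site. -/
def AdmissiblePath {d : ℕ} (ω : Config d) (x y : Site d) : Prop :=
  ∃ (n : ℕ) (u : ℕ → Site d), u 0 = x ∧ u n = y ∧
    (∀ i ≤ n, ∀ j ≤ n, i ≠ j → u i ≠ u j) ∧
    ∀ i < n,
      (u (i + 1) - u i = eVec (Fin.last d) ∨
        ∃ j : Fin d, u (i + 1) - u i = eVec j.castSucc - eVec (Fin.last d) ∨
          u (i + 1) - u i = -eVec j.castSucc - eVec (Fin.last d)) ∧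
      (u (i + 1) - u i = eVec (Fin.last d) → ω (u (i + 1)) = false)

/-- The tilted plane `L^{α,d}_η ⊆ ℤ^{d+1}`. -/
def tiltedPlane (α : ℝ) {d : ℕ} (η : Fin d → ℤ) : Set (Site d) :=
  {y | y (Fin.last d) = planeHt α η fun i => y i.castSucc}

/-- `F^{α,d}_η(x̄) = sup{n ∈ ℤ | ∃ y ∈ L^{α,d}_η, y ↣ (x̄,n)} + 1`, as an extended real. -/
noncomputable def Fheight (α : ℝ) {d : ℕ} (η : Fin d → ℤ) (ω : Config d)
    (x : Fin d → ℤ) : EReal :=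
  sSup {r : EReal | ∃ n : ℤ, r = ((n : ℝ) : EReal) ∧
    ∃ y ∈ tiltedPlane α η, AdmissiblePath ω y (Fin.snoc x n)} + 1

/-- `𝓛^{α,d}_η(h)`: the (random) set of sites of the shifted plane `L^{α,d}_η + h e_{d+1}`
reachable from the origin by an admissible λ-path. -/
def reachSet (α : ℝ) {d : ℕ} (η : Fin d → ℤ) (h : ℤ) (ω : Config d) : Set (Site d) :=
  {y | y (Fin.last d) = planeHt α η (fun i => y i.castSucc) + h ∧ AdmissiblePath ω 0 y}

/-- The displacements `±e_j − e_{d+1}` of the downward steps of a λ-path. -/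
def IsDownStep {d : ℕ} (v : Site d) : Prop :=
  ∃ j : Fin d, v = eVec j.castSucc - eVec (Fin.last d) ∨
    v = -eVec j.castSucc - eVec (Fin.last d)

/-- A single admissible step of a λ-path. -/
def LambdaStep {d : ℕ} (ω : Config d) (u v : Site d) : Prop :=
  (v - u = eVec (Fin.last d) ∧ ω v = false) ∨ IsDownStep (v - u)

/-- Reachability by an admissible walk, without requiring distinct sites. -/
def Reach {d : ℕ} (ω : Config d) : Site d → Site d → Prop :=
  Relation.ReflTransGen (LambdaStep ω)

/-- Height of a site above the tilted plane. -/
noncomputable def offset (α : ℝ) {d : ℕ} (η : Fin d → ℤ) (z : Site d) : ℤ :=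
  z (Fin.last d) - planeHt α η fun i => z i.castSucc

section Paths

variable {d : ℕ} {ω : Config d}

lemma eVec_last_last : (eVec (Fin.last d) : Site d) (Fin.last d) = 1 := by
  simp [eVec]

lemma eVec_last_castSucc (i : Fin d) : (eVec (Fin.last d) : Site d) i.castSucc = 0 := by
  simp [eVec]

lemma eVec_castSucc_last (j : Fin d) : (eVec j.castSucc : Site d) (Fin.last d) = 0 := by
  simp [eVec, Fin.ext_iff, j.isLt.ne']

lemma eVec_castSucc_castSucc (j i : Fin d) :
    (eVec j.castSucc : Site d) i.castSucc = if i = j then 1 else 0 := by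
  simp [eVec, Pi.single_apply]

lemma IsDownStep.last {v : Site d} (hv : IsDownStep v) : v (Fin.last d) = -1 := by
  obtain ⟨j, rfl | rfl⟩ := hv <;> simp [eVec_last_last, eVec_castSucc_last]

lemma lambdaStep_iff {u v : Site d} : LambdaStep ω u v ↔
    (v - u = eVec (Fin.last d) ∨
        ∃ j : Fin d, v - u = eVec j.castSucc - eVec (Fin.last d) ∨
          v - u = -eVec j.castSucc - eVec (Fin.last d)) ∧
      (v - u = eVec (Fin.last d) → ω v = false) := by
  change (_ ∨ _) ↔ (_ ∨ IsDownStep (v - u)) ∧ _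
  constructor
  · rintro (⟨h, hω⟩ | h)
    · exact ⟨Or.inl h, fun _ => hω⟩
    · refine ⟨Or.inr h, fun h' => ?_⟩
      have := h.last
      rw [h', eVec_last_last] at this
      omega
  · rintro ⟨h | h, hω⟩
    · exact Or.inl ⟨h, hω h⟩
    · exact Or.inr h

lemma AdmissiblePath.reach {x y : Site d} (h : AdmissiblePath ω x y) : Reach ω x y := by
  obtain ⟨n, u, rfl, rfl, -, hs⟩ := h
  have key : ∀ k ≤ n, Reach ω (u 0) (u k) := by
    intro k
    induction k with
    | zero => intro _; exact Relation.ReflTransGen.refl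
    | succ k ih =>
      intro hk
      exact (ih (by omega)).tail (lambdaStep_iff.2 (hs k (by omega)))
  exact key n le_rfl

lemma Reach.admissiblePath {x y : Site d} (h : Reach ω x y) : AdmissiblePath ω x y := by
  induction h with
  | refl => exact ⟨0, fun _ => x, rfl, rfl, fun i hi j hj hij => by omega, fun i hi => by omega⟩
  | @tail b c _ hbc ih =>
    obtain ⟨n, u, h0, hn, hinj, hs⟩ := ih
    by_cases hc : ∃ k ≤ n, u k = c
    · obtain ⟨k, hk, rfl⟩ := hc
      exact ⟨k, u, h0, rfl, fun i hi j hj => hinj i (hi.trans hk) j (hj.trans hk),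
        fun i hi => hs i (by omega)⟩
    · push Not at hc
      refine ⟨n + 1, fun k => if k ≤ n then u k else c, by simpa using h0, by simp, ?_, ?_⟩
      · intro i hi j hj hij
        by_cases hi' : i ≤ n <;> by_cases hj' : j ≤ n
        · simpa [hi', hj'] using hinj i hi' j hj' hij
        · simpa [hi', hj'] using hc i hi'
        · simpa [hi', hj'] using (hc j hj').symm
        · omega
      · intro i hi
        rcases (Nat.lt_succ_iff.1 hi).lt_or_eq with hi' | rfl
        · have h1 : i + 1 ≤ n := hi'
          simpa only [h1, hi'.le, if_true] using hs i hi'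
        · rw [← hn] at hbc
          simpa using lambdaStep_iff.1 hbc

lemma admissiblePath_iff_reach {x y : Site d} : AdmissiblePath ω x y ↔ Reach ω x y :=
  ⟨AdmissiblePath.reach, Reach.admissiblePath⟩

lemma Reach.add_downStep {x y v : Site d} (h : Reach ω x y) (hv : IsDownStep v) :
    Reach ω x (y + v) :=
  h.tail (Or.inr (by simpa using hv))

lemma measurableSet_lambdaStep (x y : Site d) :
    MeasurableSet {ω : Config d | LambdaStep ω x y} := by
  have hω : MeasurableSet {ω : Config d | ω y = false} :=
    measurableSet_eq_fun (measurable_pi_apply y) measurable_const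
  exact ((MeasurableSet.const _).inter hω).union (MeasurableSet.const _)

lemma measurableSet_reach (x y : Site d) : MeasurableSet {ω : Config d | Reach ω x y} := by
  have walk : ∀ n (y : Site d), MeasurableSet
      {ω : Config d | ∃ u : ℕ → Site d, u 0 = x ∧ u n = y ∧
        ∀ i < n, LambdaStep ω (u i) (u (i + 1))} := by
    intro n
    induction n with
    | zero =>
      intro y
      by_cases h : x = y
      · convert MeasurableSet.univ
        refine Set.eq_univ_of_forall fun ω => ⟨fun _ => x, rfl, h, by simp⟩
      · convert MeasurableSet.empty
        refine Set.eq_empty_of_forall_notMem ?_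
        rintro ω ⟨u, h0, h1, -⟩
        exact h (h0.symm.trans h1)
    | succ n ih =>
      intro y
      convert MeasurableSet.iUnion fun z : Site d => (ih z).inter (measurableSet_lambdaStep z y)
      ext ω
      simp only [Set.mem_ofPred_eq, Set.mem_iUnion, Set.mem_inter_iff]
      constructor
      · rintro ⟨u, h0, h1, hs⟩
        exact ⟨u n, ⟨u, h0, rfl, fun i hi => hs i (by omega)⟩, h1 ▸ hs n (by omega)⟩
      · rintro ⟨z, ⟨u, h0, h1, hs⟩, hz⟩
        refine ⟨fun k => if k ≤ n then u k else y, by simpa using h0, by simp, ?_⟩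
        intro i hi
        rcases (Nat.lt_succ_iff.1 hi).lt_or_eq with hi' | rfl
        · have hi'' : i + 1 ≤ n := hi'
          simpa only [hi'', hi'.le, if_true] using hs i hi'
        · simpa [h1] using hz
  convert MeasurableSet.iUnion fun n => walk n y
  ext ω
  simp only [Set.mem_ofPred_eq, Set.mem_iUnion]
  constructor
  · intro h
    obtain ⟨n, u, h0, h1, -, hs⟩ := h.admissiblePath
    exact ⟨n, u, h0, h1, fun i hi => lambdaStep_iff.2 (hs i hi)⟩
  · rintro ⟨n, u, rfl, rfl, hs⟩
    clear walk
    induction n with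
    | zero => exact Relation.ReflTransGen.refl
    | succ n ih => exact (ih fun i hi => hs i (by omega)).tail (hs n (by omega))

lemma reach_shift (v x y : Site d) :
    Reach (fun z => ω (z + v)) x y ↔ Reach ω (x + v) (y + v) := by
  constructor
  · intro h
    exact Relation.ReflTransGen.lift (· + v)
      (fun a b hab => by simpa [LambdaStep] using hab) _ _ h
  · intro h
    have := Relation.ReflTransGen.lift (p := LambdaStep fun z => ω (z + v)) (· - v)
      (fun a b hab => by simpa [LambdaStep] using hab) _ _ h
    simpa [Reach, Function.onFun] using this

end Paths

section Offset

variable {d : ℕ} {ω : Config d} {α : ℝ} {η : Fin d → ℤ}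

lemma offset_zero : offset α η (0 : Site d) = 0 := by
  simp [offset, planeHt]

lemma offset_snoc (x : Fin d → ℤ) (n : ℤ) :
    offset α η (Fin.snoc x n) = n - planeHt α η x := by
  simp [offset]

lemma mem_tiltedPlane_iff {y : Site d} : y ∈ tiltedPlane α η ↔ offset α η y = 0 :=
  sub_eq_zero.symm

lemma planeHt_sub_le (x y : Fin d → ℤ) :
    planeHt α η (x - y) ≤ planeHt α η x - planeHt α η y := by
  have : α * ∑ i, (η i : ℝ) * ((x - y) i : ℤ) =
      α * ∑ i, (η i : ℝ) * x i - α * ∑ i, (η i : ℝ) * y i := by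
    rw [← mul_sub, ← Finset.sum_sub_distrib]
    simp [mul_sub]
  unfold planeHt
  rw [this, le_sub_iff_add_le]
  exact (Int.le_floor_add _ _).trans_eq (by rw [sub_add_cancel])

lemma offset_sub_le (z y : Site d) :
    offset α η z - offset α η y ≤ offset α η (z - y) := by
  have := planeHt_sub_le (α := α) (η := η) (fun i => z i.castSucc) fun i => y i.castSucc
  have h : offset α η (z - y) = z (Fin.last d) - y (Fin.last d) -
      planeHt α η ((fun i => z i.castSucc) - fun i => y i.castSucc) := rfl
  rw [h]
  unfold offset
  omega

lemma offset_sub_eVec_last (z : Site d) :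
    offset α η (z - eVec (Fin.last d)) = offset α η z - 1 := by
  simp only [offset, Pi.sub_apply, eVec_last_last, eVec_last_castSucc, sub_zero]
  ring

lemma offset_downStep_nonpos (hα : α ∈ Set.Ico (0 : ℝ) 1) (hη : IsSign η) {v : Site d}
    (hv : IsDownStep v) : offset α η v ≤ 0 := by
  have hle : (-1 : ℤ) ≤ planeHt α η fun i => v i.castSucc := by
    obtain ⟨h0, h1⟩ := hα
    rw [planeHt, Int.le_floor]
    obtain ⟨j, rfl | rfl⟩ := hv <;> rcases hη j with h | h | h <;>
      simp [eVec_last_castSucc, eVec_castSucc_castSucc, h] <;> linarith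
  have := hv.last
  unfold offset
  omega

lemma exists_downStep_offset (hα : α ∈ Set.Ico (0 : ℝ) 1) (hη : IsSign η) (hd : 1 ≤ d) :
    ∃ v : Site d, IsDownStep v ∧ offset α η v = -1 := by
  obtain ⟨h0, h1⟩ := hα
  let j : Fin d := ⟨0, hd⟩
  suffices ∃ v : Site d, IsDownStep v ∧ planeHt α η (fun i => v i.castSucc) = 0 by
    obtain ⟨v, hv, h⟩ := this
    exact ⟨v, hv, by rw [offset, h, hv.last]; rfl⟩
  rcases hη j with h | h
  · refine ⟨_, ⟨j, Or.inr rfl⟩, ?_⟩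
    rw [planeHt, Int.floor_eq_zero_iff]
    simp [eVec_last_castSucc, eVec_castSucc_castSucc, h, h0, h1]
  · refine ⟨_, ⟨j, Or.inl rfl⟩, ?_⟩
    rw [planeHt, Int.floor_eq_zero_iff]
    rcases h with h | h <;>
      simp [eVec_last_castSucc, eVec_castSucc_castSucc, h, h0, h1]

lemma offset_le_sub_downStep (hα : α ∈ Set.Ico (0 : ℝ) 1) (hη : IsSign η) {v : Site d}
    (hv : IsDownStep v) (z : Site d) : offset α η z ≤ offset α η (z - v) := by
  have := offset_downStep_nonpos hα hη hv
  have := offset_sub_le (α := α) (η := η) z v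
  omega

/-- An admissible walk that gains height above the plane can be lowered by one, by
suppressing its last upward step. -/
lemma Reach.lower (hα : α ∈ Set.Ico (0 : ℝ) 1) (hη : IsSign η) {x y : Site d}
    (h : Reach ω x y) : offset α η x < offset α η y → Reach ω x (y - eVec (Fin.last d)) := by
  induction h with
  | refl => intro h; exact absurd h (lt_irrefl _)
  | @tail b c hb hbc ih =>
    intro h
    rcases hbc with ⟨hup, -⟩ | hdown
    · rw [← hup, _root_.sub_sub_cancel]
      exact hb
    · have := offset_le_sub_downStep hα hη hdown c
      rw [_root_.sub_sub_cancel] at this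
      convert (ih (by omega)).add_downStep hdown using 1
      abel

/-- Along an admissible walk towards `w`, the offset of the remaining displacement passes
through every intermediate value. -/
lemma Reach.exists_offset_eq (hα : α ∈ Set.Ico (0 : ℝ) 1) (hη : IsSign η) {k : ℤ} (hk : 0 ≤ k)
    {y w : Site d} (h : Reach ω y w) :
    k ≤ offset α η (w - y) → ∃ z, offset α η (w - z) = k ∧ Reach ω z w := by
  induction h using Relation.ReflTransGen.head_induction_on with
  | refl =>
    intro h
    refine ⟨w, ?_, Relation.ReflTransGen.refl⟩
    rw [sub_self, offset_zero] at h ⊢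
    omega
  | @head a c hac hc ih =>
    intro h
    by_cases hkc : k ≤ offset α η (w - c)
    · exact ih hkc
    · refine ⟨a, ?_, hc.head hac⟩
      have hsub : w - c = w - a - (c - a) := by abel
      rcases hac with ⟨hup, -⟩ | hdown
      · rw [hsub, hup, offset_sub_eVec_last] at hkc
        omega
      · have := offset_le_sub_downStep hα hη hdown (w - a)
        rw [← hsub] at this
        omega

lemma snoc_sub_eVec_last (x : Fin d → ℤ) (n : ℤ) :
    (Fin.snoc x n : Site d) - eVec (Fin.last d) = Fin.snoc x (n - 1) := by
  ext i
  refine Fin.lastCases ?_ (fun i => ?_) i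
  · simp [eVec_last_last]
  · simp [eVec_last_castSucc]

lemma reach_snoc_of_le (hα : α ∈ Set.Ico (0 : ℝ) 1) (hη : IsSign η) {y : Site d}
    (hy : offset α η y = 0) {x : Fin d → ℤ} {m n : ℤ} (hm : planeHt α η x ≤ m) (hmn : m ≤ n)
    (h : Reach ω y (Fin.snoc x n)) : Reach ω y (Fin.snoc x m) := by
  induction n, hmn using Int.leInduction with
  | base => exact h
  | succ n hn ih =>
    refine ih ?_
    have := h.lower hα hη (by rw [hy, offset_snoc]; omega)
    rwa [snoc_sub_eVec_last, add_sub_cancel_right] at this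

end Offset

section Bernoulli

lemma IsBernoulli.unique {ι : Type*} {p : ℝ} {P Q : Measure (ι → Bool)}
    (hP : IsBernoulli p P) (hQ : IsBernoulli p Q) : P = Q := by
  have := hP.1
  have := hQ.1
  have hm (s : Finset ι) : Measurable (s.restrict : (ι → Bool) → s → Bool) :=
    measurable_pi_lambda _ fun _ => measurable_pi_apply _
  refine IsProjectiveLimit.unique (P := fun s : Finset ι => Q.map s.restrict) (fun s => ?_)
    fun s => rfl
  refine Measure.ext_of_singleton fun g => ?_
  classical
  let f : ι → Bool := fun x => if h : x ∈ s then g ⟨x, h⟩ else false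
  have hpre : (s.restrict : (ι → Bool) → s → Bool) ⁻¹' {g} = {ω | ∀ x ∈ s, ω x = f x} := by
    ext ω
    simp only [Set.mem_preimage, Set.mem_singleton_iff, funext_iff, Subtype.forall,
      Finset.restrict, Set.mem_ofPred_eq, f]
    exact forall₂_congr fun x hx => by simp [hx]
  rw [Measure.map_apply (hm s) (measurableSet_singleton g),
    Measure.map_apply (hm s) (measurableSet_singleton g), hpre, hP.2, hQ.2]

variable {d : ℕ} {p : ℝ} {P : Measure (Config d)}

lemma measurable_shift (v : Site d) : Measurable fun (ω : Config d) z => ω (z + v) :=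
  measurable_pi_lambda _ fun _ => measurable_pi_apply _

lemma IsBernoulli.map_shift (hP : IsBernoulli p P) (v : Site d) :
    P.map (fun ω z => ω (z + v)) = P := by
  have := hP.1
  refine IsBernoulli.unique ⟨Measure.isProbabilityMeasure_map (measurable_shift v).aemeasurable,
    fun s f => ?_⟩ hP
  have hs : MeasurableSet {ω : Config d | ∀ x ∈ s, ω x = f x} := by
    have : {ω : Config d | ∀ x ∈ s, ω x = f x} = ⋂ x ∈ s, {ω | ω x = f x} := by
      ext; simp
    rw [this]
    exact s.measurableSet_biInter fun x _ =>
      measurableSet_eq_fun (measurable_pi_apply x) measurable_const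
  rw [Measure.map_apply (measurable_shift v) hs]
  have := hP.2 (s.map (Equiv.addRight v).toEmbedding) fun x => f (x - v)
  simp only [Finset.forall_mem_map, Finset.prod_map, Equiv.coe_toEmbedding, Equiv.coe_addRight,
    add_sub_cancel_right] at this
  exact this

lemma IsBernoulli.reach_eq (hP : IsBernoulli p P) (y w : Site d) :
    P {ω | Reach ω y w} = P {ω | Reach ω 0 (w - y)} := by
  conv_rhs => rw [← hP.map_shift y,
    Measure.map_apply (measurable_shift y) (measurableSet_reach _ _)]
  congr 1
  ext ω
  simp [reach_shift]

end Bernoulli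

section Criterion

variable {d : ℕ} {p α : ℝ} {η : Fin d → ℤ} {P : Measure (Config d)}

lemma mem_reachSet_iff {k : ℤ} {ω : Config d} {z : Site d} :
    z ∈ reachSet α η k ω ↔ offset α η z = k ∧ Reach ω 0 z := by
  rw [reachSet, Set.mem_ofPred_eq, admissiblePath_iff_reach, offset, sub_eq_iff_eq_add']

lemma lintegral_encard_reachSet (k : ℤ) :
    ∫⁻ ω, ((reachSet α η k ω).encard : ℝ≥0∞) ∂P =
      ∑' z : Site d, P {ω | offset α η z = k ∧ Reach ω 0 z} := by
  have hm (z : Site d) : MeasurableSet {ω : Config d | offset α η z = k ∧ Reach ω 0 z} :=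
    (MeasurableSet.const _).inter (measurableSet_reach 0 z)
  calc
    _ = ∫⁻ ω, ∑' z : Site d,
        {ω | offset α η z = k ∧ Reach ω 0 z}.indicator (fun _ => (1 : ℝ≥0∞)) ω ∂P := by
      refine lintegral_congr fun ω => ?_
      rw [← ENNReal.tsum_set_one, tsum_subtype (reachSet α η k ω) fun _ => (1 : ℝ≥0∞)]
      refine tsum_congr fun z => ?_
      classical
      simp only [Set.indicator_apply, mem_reachSet_iff, Set.mem_ofPred_eq]
    _ = _ := by
      rw [lintegral_tsum fun z => (measurable_const.indicator (hm z)).aemeasurable]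
      exact tsum_congr fun z => by simp [lintegral_indicator (hm z)]

lemma measure_exists_reach_le (hP : IsBernoulli p P) (w : Site d) (k : ℤ) :
    P {ω | ∃ z, offset α η (w - z) = k ∧ Reach ω z w} ≤
      ∫⁻ ω, ((reachSet α η k ω).encard : ℝ≥0∞) ∂P := by
  rw [lintegral_encard_reachSet, Set.ofPred_exists]
  refine (measure_iUnion_le _).trans_eq ?_
  rw [← (Equiv.subLeft w).tsum_eq fun z => P {ω | offset α η z = k ∧ Reach ω 0 z}]
  refine tsum_congr fun z => ?_
  by_cases h : offset α η (w - z) = k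
  · simpa [h] using hP.reach_eq z w
  · simp [h]

/-- The event that the plane is joined to a site above `x` at height at least
`planeHt α η x + h − 1` is at most as likely as the expected size of the reachable set. -/
lemma measure_reach_high_le (hd : 1 ≤ d) (hα : α ∈ Set.Ico (0 : ℝ) 1) (hη : IsSign η)
    (hP : IsBernoulli p P) (x : Fin d → ℤ) {h : ℕ} (hh : 1 ≤ h) :
    P {ω | ∃ n : ℤ, planeHt α η x + h - 1 ≤ n ∧
        ∃ y, offset α η y = 0 ∧ Reach ω y (Fin.snoc x n)} ≤
      ∫⁻ ω, ((reachSet α η ((h : ℤ) - 2) ω).encard : ℝ≥0∞) ∂P := by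
  have := hP.1
  rcases hh.eq_or_lt with rfl | hh
  · obtain ⟨v, hv, hoff⟩ := exists_downStep_offset hα hη hd
    refine prob_le_one.trans ?_
    calc (1 : ℝ≥0∞) = ∫⁻ _, 1 ∂P := by simp
      _ ≤ _ := by
        refine lintegral_mono fun ω => ?_
        have hmem : v ∈ reachSet α η (((1 : ℕ) : ℤ) - 2) ω := by
          refine mem_reachSet_iff.2 ⟨hoff, ?_⟩
          simpa using Reach.add_downStep (ω := ω) (x := 0) Relation.ReflTransGen.refl hv
        have : (1 : ℕ∞) ≤ (reachSet α η (((1 : ℕ) : ℤ) - 2) ω).encard :=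
          Set.one_le_encard_iff_nonempty.2 ⟨v, hmem⟩
        simpa using ENat.toENNReal_le.2 this
  · refine le_trans (measure_mono ?_)
      (measure_exists_reach_le hP (Fin.snoc x (planeHt α η x + h - 2)) _)
    rintro ω ⟨n, hn, y, hy, hr⟩
    have hr' := reach_snoc_of_le (m := planeHt α η x + h - 2) hα hη hy (by omega) (by omega) hr
    refine hr'.exists_offset_eq hα hη (by omega) ?_
    have := offset_sub_le (α := α) (η := η) (Fin.snoc x (planeHt α η x + h - 2)) y
    rw [hy, offset_snoc] at this
    omega

lemma exists_reach_of_le_Fheight {ω : Config d} {x : Fin d → ℤ} {h : ℕ}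
    (hF : ((h : ℝ) : EReal) ≤ Fheight α η ω x - ((planeHt α η x : ℝ) : EReal)) :
    ∃ n : ℤ, planeHt α η x + h - 1 ≤ n ∧
      ∃ y, offset α η y = 0 ∧ Reach ω y (Fin.snoc x n) := by
  by_contra! hcon
  have hsup : sSup {r : EReal | ∃ n : ℤ, r = ((n : ℝ) : EReal) ∧
      ∃ y ∈ tiltedPlane α η, AdmissiblePath ω y (Fin.snoc x n)} ≤
      (((planeHt α η x + h - 2 : ℤ) : ℝ) : EReal) := by
    refine sSup_le ?_
    rintro _ ⟨n, rfl, y, hy, hr⟩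
    have hn : n ≤ planeHt α η x + h - 2 := by
      by_contra hlt
      exact hcon n (by omega) y (mem_tiltedPlane_iff.1 hy) hr.reach
    exact_mod_cast hn
  have hle : Fheight α η ω x - ((planeHt α η x : ℝ) : EReal) ≤
      ((((planeHt α η x + h - 2 : ℤ) : ℝ) + 1 - planeHt α η x : ℝ) : EReal) := by
    rw [EReal.coe_sub, EReal.coe_add]
    exact EReal.sub_le_sub (add_le_add hsup le_rfl) le_rfl
  have := EReal.coe_le_coe_iff.1 (hF.trans hle)
  push_cast at this
  linarith

lemma eq_add_or_sub_single_of_sum_abs_sub_eq_one {x y : Fin d → ℤ} (h : ∑ i, |x i - y i| = 1) :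
    ∃ j, y = x + Pi.single j 1 ∨ y = x - Pi.single j 1 := by
  obtain ⟨j, hj⟩ : ∃ j, x j ≠ y j := by
    by_contra! hcon
    simp [hcon] at h
  have hsplit := Finset.add_sum_erase Finset.univ (fun i => |x i - y i|) (Finset.mem_univ j)
  have hnonneg : 0 ≤ ∑ i ∈ Finset.univ.erase j, |x i - y i| :=
    Finset.sum_nonneg fun i _ => abs_nonneg _
  have hpos : 1 ≤ |x j - y j| := Int.one_le_abs (sub_ne_zero.2 hj)
  rw [h] at hsplit
  have hone : |x j - y j| = 1 := by omega
  have hrest : ∀ i, i ≠ j → x i = y i := by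
    intro i hi
    have hzero := (Finset.sum_eq_zero_iff_of_nonneg fun i _ => abs_nonneg (x i - y i)).1
      (show ∑ i ∈ Finset.univ.erase j, |x i - y i| = 0 by omega) i (by simp [hi])
    exact sub_eq_zero.1 (abs_eq_zero.1 hzero)
  refine ⟨j, ?_⟩
  rcases (abs_eq zero_le_one).1 hone with h' | h'
  · right
    ext i
    by_cases hi : i = j
    · subst hi; simp; omega
    · simp [hi, hrest i hi]
  · left
    ext i
    by_cases hi : i = j
    · subst hi; simp; omega
    · simp [hi, hrest i hi]

lemma Reach.snoc_neighbour {ω : Config d} {z : Site d} {x y : Fin d → ℤ} {n : ℤ}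
    (hxy : ∑ i, |x i - y i| = 1) (h : Reach ω z (Fin.snoc x n)) :
    Reach ω z (Fin.snoc y (n - 1)) := by
  obtain ⟨j, hy⟩ := eq_add_or_sub_single_of_sum_abs_sub_eq_one hxy
  have hstep : IsDownStep ((Fin.snoc y (n - 1) : Site d) - Fin.snoc x n) := by
    refine ⟨j, hy.imp ?_ ?_⟩ <;> rintro rfl <;> ext i <;>
      refine Fin.lastCases ?_ (fun i => ?_) i <;>
      simp [eVec_last_last, eVec_castSucc_last, eVec_last_castSucc, eVec_castSucc_castSucc,
        Pi.single_apply]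
  simpa using h.add_downStep hstep

/-- If the set of reachable heights is bounded above every base point, then the lowest
surface above all reachable sites is open, Lipschitz and above the plane. -/
lemma mem_LIP_of_bounded {ω : Config d}
    (hb : ∀ x : Fin d → ℤ, ∃ b : ℤ, ∀ n : ℤ,
      (∃ y, offset α η y = 0 ∧ Reach ω y (Fin.snoc x n)) → n ≤ b) :
    ω ∈ LIP α η := by
  have hplane (x : Fin d → ℤ) :
      ∃ y, offset α η y = 0 ∧ Reach ω y (Fin.snoc x (planeHt α η x)) :=
    ⟨_, by rw [offset_snoc, sub_self], Relation.ReflTransGen.refl⟩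
  choose f hf hmax using fun x => Int.exists_greatest_of_bdd (hb x) ⟨_, hplane x⟩
  have hlip : ∀ x y : Fin d → ℤ, ∑ i, |x i - y i| = 1 → f x - 1 ≤ f y := by
    intro x y hxy
    obtain ⟨z, hz, hr⟩ := hf x
    exact hmax y _ ⟨z, hz, hr.snoc_neighbour hxy⟩
  refine ⟨fun x => f x + 1, fun x y hxy => ?_, fun x => ⟨?_, ?_⟩⟩
  · have h1 := hlip x y hxy
    have h2 := hlip y x (by simpa only [abs_sub_comm] using hxy)
    rw [abs_le]
    dsimp only
    constructor <;> omega
  · by_contra hω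
    obtain ⟨z, hz, hr⟩ := hf x
    have hup : LambdaStep ω (Fin.snoc x (f x)) (Fin.snoc x (f x + 1)) := by
      refine Or.inl ⟨?_, by simpa using hω⟩
      have := snoc_sub_eVec_last x (f x + 1)
      rw [add_sub_cancel_right] at this
      rw [← this, _root_.sub_sub_cancel]
    have := hmax x _ ⟨z, hz, hr.tail hup⟩
    omega
  · have := hmax x _ (hplane x)
    change _ < f x + 1
    omega

end Criterion

/-- Criterion for the existence of an open Lipschitz surface:
`P_p(F^{α,d}_η(x̄) − ⌊α ∑ᵢ ηᵢ x̄ᵢ⌋ ≥ h) ≤ E_p[|𝓛^{α,d}_η(h−2)|]` for every `x̄ ∈ ℤ^d` and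
`h ∈ ℕ`, and if `E_p[|𝓛^{α,d}_η(h)|] → 0` as `h → ∞` then `P_p(LIP^{α,d}_η) = 1`. -/
theorem criterion_existence_open_lipschitz_surface
    {d : ℕ} (hd : 1 ≤ d) (α : ℝ) (hα : α ∈ Set.Ico (0 : ℝ) 1)
    (η : Fin d → ℤ) (hη : IsSign η)
    (p : ℝ) (hp : p ∈ Set.Icc (0 : ℝ) 1)
    (P : Measure (Config d)) (hP : IsBernoulli p P) :
    (∀ (x : Fin d → ℤ) (h : ℕ), 1 ≤ h →
      P {ω | ((h : ℝ) : EReal) ≤ Fheight α η ω x - ((planeHt α η x : ℝ) : EReal)} ≤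
        ∫⁻ ω, ((reachSet α η ((h : ℤ) - 2) ω).encard : ℝ≥0∞) ∂P) ∧
    (Tendsto (fun h : ℤ => ∫⁻ ω, ((reachSet α η h ω).encard : ℝ≥0∞) ∂P) atTop
        (nhds 0) →
      P (LIP α η) = 1) := by
  have hprob := hP.1
  refine ⟨fun x h hh => ?_, fun hlim => ?_⟩
  · exact (measure_mono fun ω hω => exists_reach_of_le_Fheight hω).trans
      (measure_reach_high_le hd hα hη hP x hh)
  · have hbdd : ∀ᵐ ω ∂P, ∀ x : Fin d → ℤ, ∃ b : ℤ, ∀ n : ℤ,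
        (∃ y, offset α η y = 0 ∧ Reach ω y (Fin.snoc x n)) → n ≤ b := by
      refine ae_all_iff.2 fun x => ?_
      rw [ae_iff]
      have hlim' : Tendsto (fun h : ℕ => ∫⁻ ω,
          ((reachSet α η (((h + 1 : ℕ) : ℤ) - 2) ω).encard : ℝ≥0∞) ∂P) atTop (nhds 0) := by
        refine hlim.comp (tendsto_atTop_mono (fun h => ?_)
          (tendsto_atTop_add_const_right _ (-1) tendsto_natCast_atTop_atTop))
        push_cast
        omega
      refine le_antisymm (ge_of_tendsto' hlim' fun h => ?_) zero_le
      refine (measure_mono fun ω hω => ?_).trans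
        (measure_reach_high_le hd hα hη hP x (Nat.le_add_left 1 h))
      have hω : ¬ ∃ b : ℤ, ∀ n : ℤ,
        (∃ y, offset α η y = 0 ∧ Reach ω y (Fin.snoc x n)) → n ≤ b := hω
      push Not at hω
      obtain ⟨n, hr, hn⟩ := hω (planeHt α η x + (h + 1 : ℕ) - 1)
      exact ⟨n, hn.le, hr⟩
    have hLIP : ∀ᵐ ω ∂P, ω ∈ LIP α η := hbdd.mono fun ω hω => mem_LIP_of_bounded hω
    exact (measure_congr (eventuallyEq_univ.2 hLIP)).trans measure_univ
end

section
/- General lower bound with free parameters: let α ∈ [0,1), d ∈ ℕ, k ∈ {0,…,d}, and let p₁, p₂, p₃, p₄ ∈ (0,1) satisfy p₁ + p₂ + p₃ + p₄ = 1. Then q_L(α,d,k) ≥ min{ (1/k)·p₁·√(p₂p₃), p₁·(p₃/k)^{1/(1−α)}, p₁p₄/(2(d−k)) }, where any term whose denominator vanishes (i.e. the first two terms when k = 0, and the third term when k = d) is interpreted as +∞. -/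
open MeasureTheory Filter ENNReal

namespace LipschitzPercolation

/-- Steps of admissible paths: `none` is the upward step, `some (i, b)` the diagonal downward
step in the direction `±eᵢ`. -/
abbrev Step (d : ℕ) := Option (Fin d × Bool)

/-- Displacement of a step, as a pair (horizontal part, vertical part). -/
def disp {d : ℕ} : Step d → (Fin d → ℤ) × ℤ
  | none => (0, 1)
  | some (i, b) => (Pi.single i (if b then 1 else -1), -1)

/-- The site of `ℤ^{d+1}` with horizontal part `y.1` and height `y.2`. -/
def toSite {d : ℕ} (y : (Fin d → ℤ) × ℤ) : Site d := Fin.snoc y.1 y.2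

lemma toSite_injective {d : ℕ} : Function.Injective (toSite (d := d)) := by
  rintro ⟨x, m⟩ ⟨y, n⟩ h
  have h' := Fin.snoc_injective2 h
  exact Prod.ext h'.1 h'.2

/-- The first `N` steps of `v` form an admissible path: it starts on the tilted plane, and every
upward step ends in a closed site. -/
def IsAdmissible {d : ℕ} (α : ℝ) (η : Fin d → ℤ) (ω : Config d) (v : ℕ → (Fin d → ℤ) × ℤ)
    (N : ℕ) : Prop :=
  (v 0).2 = planeHt α η (v 0).1 ∧
    ∀ j < N, ∃ t : Step d, v (j + 1) = v j + disp t ∧ (t = none → ω (toSite (v (j + 1))) = false)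

/-- `y` is the end point of an admissible path. -/
def Reach {d : ℕ} (α : ℝ) (η : Fin d → ℤ) (ω : Config d) (y : (Fin d → ℤ) × ℤ) : Prop :=
  ∃ N v, IsAdmissible α η ω v N ∧ v N = y

section Deterministic

variable {d : ℕ} {α : ℝ} {η : Fin d → ℤ} {ω : Config d}

lemma reach_plane (x : Fin d → ℤ) : Reach α η ω (x, planeHt α η x) :=
  ⟨0, fun _ => (x, planeHt α η x), ⟨rfl, by simp⟩, rfl⟩

lemma Reach.step {y : (Fin d → ℤ) × ℤ} (h : Reach α η ω y) (t : Step d)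
    (ht : t = none → ω (toSite (y + disp t)) = false) : Reach α η ω (y + disp t) := by
  obtain ⟨N, v, ⟨h0, hv⟩, rfl⟩ := h
  refine ⟨N + 1, fun m => if m ≤ N then v m else v N + disp t, ⟨by simpa using h0, ?_⟩, by simp⟩
  intro j hj
  rcases Nat.lt_succ_iff_lt_or_eq.1 hj with hj | rfl
  · simpa [hj.le, Nat.succ_le_of_lt hj] using hv j hj
  · exact ⟨t, by simp, by simpa using ht⟩

lemma Reach.descend (m : ℕ) (x y : Fin d → ℤ) (n : ℤ) (hm : ∑ i, |x i - y i| = m)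
    (h : Reach α η ω (x, n)) : Reach α η ω (y, n - m) := by
  induction m generalizing x n with
  | zero =>
    have : x = y := by
      funext i
      have := (Finset.sum_eq_zero_iff_of_nonneg (fun i _ => abs_nonneg (x i - y i))).1
        (by simpa using hm) i (Finset.mem_univ i)
      linarith [abs_eq_zero.1 this]
    subst this
    simpa using h
  | succ m ih =>
    obtain ⟨i, hi⟩ : ∃ i, x i ≠ y i := by
      by_contra! hc
      simp only [hc, sub_self, abs_zero, Finset.sum_const_zero] at hm
      push_cast at hm
      omega
    obtain ⟨b, hb⟩ : ∃ b : Bool,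
        |x i + (if b then 1 else -1) - y i| = |x i - y i| - 1 := by
      rcases lt_or_gt_of_ne hi with hlt | hlt
      · exact ⟨true, by simp only [if_true]; rw [abs_of_nonpos, abs_of_neg] <;> linarith⟩
      · refine ⟨false, ?_⟩
        simp only [Bool.false_eq_true, if_false]
        rw [abs_of_nonneg, abs_of_pos] <;> linarith
    have hstep := h.step (some (i, b)) (by simp)
    have := ih (x + Pi.single i (if b then 1 else -1)) (n - 1) ?_
      (by simpa [disp, sub_eq_add_neg] using hstep)
    · push_cast
      rwa [show n - ((m : ℤ) + 1) = n - 1 - m by ring]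
    · rw [← Finset.add_sum_erase _ _ (Finset.mem_univ i)] at hm ⊢
      have : ∑ j ∈ Finset.univ.erase i,
          |(x + Pi.single i (if b then 1 else -1) : Fin d → ℤ) j - y j| =
          ∑ j ∈ Finset.univ.erase i, |x j - y j| := by
        refine Finset.sum_congr rfl fun j hj => ?_
        simp [Finset.ne_of_mem_erase hj]
      rw [this]
      simp only [Pi.add_apply, Pi.single_eq_same, hb]
      push_cast at hm
      linarith

/-- If the heights reachable above the origin are bounded, the lowest open Lipschitz surface above
the plane exists. -/
lemma mem_LIP_of_bddAbove (hb : BddAbove {n | Reach α η ω (0, n)}) : ω ∈ LIP α η := by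
  have hnat : ∀ x y : Fin d → ℤ, ∃ m : ℕ, ∑ i, |x i - y i| = m := fun x y =>
    Int.eq_ofNat_of_zero_le (Finset.sum_nonneg fun i _ => abs_nonneg _)
  have hbdd : ∀ x, BddAbove {n | Reach α η ω (x, n)} := by
    intro x
    obtain ⟨M, hM⟩ := hb
    obtain ⟨m, hm⟩ := hnat x 0
    refine ⟨M + m, fun n hn => ?_⟩
    have := hM (Reach.descend m x 0 n hm hn)
    linarith
  have hne : ∀ x, {n | Reach α η ω (x, n)}.Nonempty := fun x => ⟨_, reach_plane x⟩
  have hmem : ∀ x, Reach α η ω (x, sSup {n | Reach α η ω (x, n)}) := fun x =>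
    Int.csSup_mem (hne x) (hbdd x)
  have hle : ∀ x n, Reach α η ω (x, n) → n ≤ sSup {n | Reach α η ω (x, n)} := fun x n hn =>
    le_csSup (hbdd x) hn
  refine ⟨fun x => sSup {n | Reach α η ω (x, n)} + 1, ?_, fun x => ⟨?_, ?_⟩⟩
  · have key : ∀ x y : Fin d → ℤ, (∑ i, |x i - y i|) = 1 →
        sSup {n | Reach α η ω (x, n)} - 1 ≤ sSup {n | Reach α η ω (y, n)} := fun x y h =>
      hle _ _ (by simpa using Reach.descend 1 x y _ (by simpa using h) (hmem x))
    intro x y h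
    have h1 := key x y h
    have h2 := key y x (by simpa only [abs_sub_comm] using h)
    rw [abs_le]
    constructor <;> linarith
  · by_contra hc
    have hup := (hmem x).step none (fun _ => by simpa [disp, toSite] using hc)
    have := hle x (sSup {n | Reach α η ω (x, n)} + 1) (by simpa [disp] using hup)
    linarith
  · have := hle x _ (reach_plane x)
    linarith

/-- A reachable point is the end of an admissible path without repeated points. -/
lemma Reach.exists_injOn {y : (Fin d → ℤ) × ℤ} (h : Reach α η ω y) :
    ∃ N v, IsAdmissible α η ω v N ∧ v N = y ∧ Set.InjOn v (Set.Iic N) := by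
  classical
  have hex : ∃ N, ∃ v, IsAdmissible α η ω v N ∧ v N = y := h
  obtain ⟨v, ⟨h0, hv⟩, hy⟩ := Nat.find_spec hex
  set N := Nat.find hex with hN
  refine ⟨N, v, ⟨h0, hv⟩, hy, ?_⟩
  have key : ∀ i j, i < j → j ≤ N → v i ≠ v j := by
    intro i j hij hj heq
    refine Nat.find_min hex (m := N - (j - i)) (by omega)
      ⟨fun m => if m ≤ i then v m else v (m + (j - i)), ⟨by simpa using h0, fun m hm => ?_⟩, ?_⟩
    · rcases lt_trichotomy m i with hmi | rfl | hmi
      · simpa [hmi.le, Nat.succ_le_of_lt hmi] using hv m (by omega)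
      · have := hv j (by omega)
        rw [← heq] at this
        simpa [show m + 1 + (j - m) = j + 1 by omega] using this
      · have := hv (m + (j - i)) (by omega)
        simpa [show ¬ m ≤ i by omega, show ¬ m + 1 ≤ i by omega,
          show m + 1 + (j - i) = m + (j - i) + 1 by omega] using this
    · rcases hj.eq_or_lt with hj | hj
      · subst hj
        simpa [show N - (N - i) = i by omega, show i + (N - i) = N by omega, heq] using hy
      · simpa [show ¬ N - (j - i) ≤ i by omega, show N - (j - i) + (j - i) = N by omega] using hy
  intro i hi j hj hij
  by_contra hne
  rcases lt_or_gt_of_ne hne with hlt | hlt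
  · exact key i j hlt hj hij
  · exact key j i hlt hi hij.symm

end Deterministic

/-- Starting point, on the plane, of the path of `N` steps `t` that ends above the origin. -/
noncomputable def start {d : ℕ} (α : ℝ) (η : Fin d → ℤ) (t : ℕ → Step d) (N : ℕ) :
    (Fin d → ℤ) × ℤ :=
  (-∑ j ∈ Finset.range N, (disp (t j)).1, planeHt α η (-∑ j ∈ Finset.range N, (disp (t j)).1))

/-- The `m`-th point of the path of `N` steps `t` that starts on the plane and ends above the
origin. -/
noncomputable def pos {d : ℕ} (α : ℝ) (η : Fin d → ℤ) (t : ℕ → Step d) (N m : ℕ) :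
    (Fin d → ℤ) × ℤ :=
  start α η t N + ∑ j ∈ Finset.range m, disp (t j)

/-- End points of the upward steps of a path. -/
noncomputable def upSites {d : ℕ} (α : ℝ) (η : Fin d → ℤ) (t : ℕ → Step d) (N : ℕ) :
    Finset (Site d) :=
  ((Finset.range N).filter fun j => t j = none).image fun j => toSite (pos α η t N (j + 1))

/-- The path is free of repetitions and ends at nonnegative height. -/
def IsGood {d : ℕ} (α : ℝ) (η : Fin d → ℤ) (t : ℕ → Step d) (N : ℕ) : Prop :=
  Set.InjOn (pos α η t N) (Set.Iic N) ∧ 0 ≤ (pos α η t N N).2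

/-- Extension of a finite sequence of steps by upward steps. -/
def extend {d N : ℕ} (s : Fin N → Step d) (j : ℕ) : Step d :=
  if h : j < N then s ⟨j, h⟩ else none

/-- The event that some good path of `N` steps has all its upward steps ending in closed sites. -/
def goodEvent {d : ℕ} (α : ℝ) (η : Fin d → ℤ) (N : ℕ) : Set (Config d) :=
  ⋃ s : {s : Fin N → Step d // IsGood α η (extend s) N},
    {ω | ∀ x ∈ upSites α η (extend s.1) N, ω x = false}

section Counting

variable {d : ℕ} {α : ℝ} {η : Fin d → ℤ}

lemma extend_of_lt {N j : ℕ} (t : ℕ → Step d) (hj : j < N) :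
    extend (fun i : Fin N => t i) j = t j := by simp [extend, hj]

lemma pos_congr {t t' : ℕ → Step d} {N m : ℕ} (h : ∀ j < N, t j = t' j) (hm : m ≤ N) :
    pos α η t N m = pos α η t' N m := by
  have hm' : ∑ j ∈ Finset.range m, disp (t j) = ∑ j ∈ Finset.range m, disp (t' j) :=
    Finset.sum_congr rfl fun j hj => by rw [h j ((Finset.mem_range.1 hj).trans_le hm)]
  have hN : ∑ j ∈ Finset.range N, (disp (t j)).1 = ∑ j ∈ Finset.range N, (disp (t' j)).1 :=
    Finset.sum_congr rfl fun j hj => by rw [h j (Finset.mem_range.1 hj)]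
  simp only [pos, start, hm', hN]

lemma upSites_congr {t t' : ℕ → Step d} {N : ℕ} (h : ∀ j < N, t j = t' j) :
    upSites α η t N = upSites α η t' N := by
  unfold upSites
  rw [Finset.filter_congr fun j hj => by rw [h j (Finset.mem_range.1 hj)]]
  refine Finset.image_congr fun j hj => ?_
  have hj : j < N := by simpa using (Finset.mem_filter.1 (Finset.mem_coe.1 hj)).1
  simp only [pos_congr h (Nat.succ_le_of_lt hj)]

lemma exists_goodEvent_of_reach {ω : Config d} {n : ℤ} (hn : 0 ≤ n)
    (h : Reach α η ω (0, n)) : ∃ (N : ℕ) (t : ℕ → Step d),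
      (pos α η t N N).2 = n ∧ ω ∈ goodEvent α η N := by
  obtain ⟨N, v, ⟨h0, hv⟩, hvN, hinj⟩ := h.exists_injOn
  have hv' : ∀ j, ∃ t : Step d, j < N →
      v (j + 1) = v j + disp t ∧ (t = none → ω (toSite (v (j + 1))) = false) := by
    intro j
    by_cases hj : j < N
    · exact (hv j hj).imp fun t ht _ => ht
    · exact ⟨none, fun h => absurd h hj⟩
  choose t ht using hv'
  have hsum : ∀ m ≤ N, v m = v 0 + ∑ j ∈ Finset.range m, disp (t j) := by
    intro m
    induction m with
    | zero => simp
    | succ m ih =>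
      intro hm
      rw [(ht m hm).1, ih (by omega), Finset.sum_range_succ, add_assoc]
  have hstart : start α η t N = v 0 := by
    have h1 : (v 0).1 = -∑ j ∈ Finset.range N, (disp (t j)).1 := by
      have := congrArg Prod.fst (hsum N le_rfl)
      rw [hvN, Prod.fst_add, Prod.fst_sum] at this
      exact eq_neg_of_add_eq_zero_left this.symm
    exact Prod.ext h1.symm (by rw [h0, h1]; rfl)
  have hpos : ∀ m ≤ N, pos α η t N m = v m := fun m hm => by rw [pos, hstart, hsum m hm]
  have hext : ∀ j < N, extend (fun i : Fin N => t i) j = t j := fun j hj => extend_of_lt t hj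
  refine ⟨N, t, by rw [hpos N le_rfl, hvN], ?_⟩
  refine Set.mem_iUnion.2 ⟨⟨fun i => t i, ?_, ?_⟩, ?_⟩
  · exact hinj.congr fun m hm => by rw [pos_congr hext hm, hpos m hm]
  · rw [pos_congr hext le_rfl, hpos N le_rfl, hvN]
    exact hn
  · intro x hx
    rw [upSites_congr hext] at hx
    simp only [upSites, Finset.mem_image, Finset.mem_filter, Finset.mem_range] at hx
    obtain ⟨j, ⟨hj, hjt⟩, rfl⟩ := hx
    rw [hpos _ (Nat.succ_le_of_lt hj)]
    exact (ht j hj).2 hjt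

/-- Indicator of an upward step. -/
def upInd (t : Step d) : ℕ := if t = none then 1 else 0

/-- Indicator of a step in one of the directions `+e₁, …, +e_k`. -/
def plusInd (k : ℕ) : Step d → ℕ
  | none => 0
  | some (i, b) => if (i : ℕ) < k then (if b then 1 else 0) else 0

/-- Indicator of a step in one of the directions `-e₁, …, -e_k`. -/
def minusInd (k : ℕ) : Step d → ℕ
  | none => 0
  | some (i, b) => if (i : ℕ) < k then (if b then 0 else 1) else 0

/-- Indicator of a step in one of the directions `±e_{k+1}, …, ±e_d`. -/
def sideInd (k : ℕ) : Step d → ℕ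
  | none => 0
  | some (i, _) => if (i : ℕ) < k then 0 else 1

/-- Number of steps among the first `N` counted by an indicator. -/
def count (ind : Step d → ℕ) (t : ℕ → Step d) (N : ℕ) : ℕ := ∑ j ∈ Finset.range N, ind (t j)

lemma count_add (k : ℕ) (t : ℕ → Step d) (N : ℕ) :
    count upInd t N + count (plusInd k) t N + count (minusInd k) t N + count (sideInd k) t N
      = N := by
  simp only [count, ← Finset.sum_add_distrib]
  refine (Finset.sum_congr rfl fun j _ => ?_).trans (by simp : ∑ _j ∈ Finset.range N, 1 = N)
  rcases t j with _ | ⟨i, b⟩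
  · simp [upInd, plusInd, minusInd, sideInd]
  · by_cases hi : (i : ℕ) < k <;> cases b <;> simp [upInd, plusInd, minusInd, sideInd, hi]

lemma pos_height_le (k : ℕ) (t : ℕ → Step d) (N : ℕ) :
    ((pos α (etaK d k) t N N).2 : ℝ) ≤ count upInd t N - (1 + α) * count (plusInd k) t N
      - (1 - α) * count (minusInd k) t N - count (sideInd k) t N := by
  have hstep : ∀ s : Step d, ((disp s).2 : ℝ) - α * ∑ i, (etaK d k i : ℝ) * ((disp s).1 i : ℝ) =
      upInd s - (1 + α) * plusInd k s - (1 - α) * minusInd k s - sideInd k s := by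
    rintro (_ | ⟨i, b⟩)
    · simp [disp, upInd, plusInd, minusInd, sideInd]
    · have : ∑ j, (etaK d k j : ℝ) * ((disp (some (i, b))).1 j : ℝ) =
          etaK d k i * (if b then 1 else -1) := by
        rw [Finset.sum_eq_single i]
        · cases b <;> simp [disp]
        · intro j _ hj
          simp [disp, hj]
        · simp
      rw [this]
      by_cases hi : (i : ℕ) < k <;> cases b <;>
        simp [disp, etaK, upInd, plusInd, minusInd, sideInd, hi] <;> ring
  have hfloor : ((start α (etaK d k) t N).2 : ℝ) ≤
      -∑ j ∈ Finset.range N, α * ∑ i, (etaK d k i : ℝ) * ((disp (t j)).1 i : ℝ) := by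
    refine (Int.floor_le _).trans_eq ?_
    rw [← Finset.mul_sum, Finset.sum_comm, ← mul_neg]
    refine congrArg (α * ·) (Eq.trans (Finset.sum_congr rfl fun i _ => ?_)
      (Finset.sum_neg_distrib _))
    rw [← Finset.mul_sum]
    simp [Finset.sum_apply]
  have hsum := Finset.sum_congr (rfl : Finset.range N = Finset.range N)
    fun j _ => hstep (t j)
  simp only [Finset.sum_sub_distrib, ← Finset.mul_sum] at hsum
  simp only [← Finset.mul_sum] at hfloor
  simp only [count, pos, Prod.snd_add, Prod.snd_sum]
  push_cast
  linarith

lemma card_upSites {t : ℕ → Step d} {N : ℕ} (h : IsGood α η t N) :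
    (upSites α η t N).card = count upInd t N := by
  rw [upSites, Finset.card_image_of_injOn, Finset.card_filter]
  · rfl
  · intro i hi j hj hij
    simp only [Finset.coe_filter, Finset.mem_range, Set.mem_ofPred_eq] at hi hj
    exact Nat.succ_injective
      (h.1 (Nat.succ_le_of_lt hi.1) (Nat.succ_le_of_lt hj.1) (toSite_injective hij))

/-- Weight of a step. -/
def weight (k : ℕ) (p a b c : ℝ) (s : Step d) : ℝ :=
  p ^ upInd s * a ^ plusInd k s * b ^ minusInd k s * c ^ sideInd k s

lemma prod_weight (k : ℕ) (p a b c : ℝ) {N : ℕ} (s : Fin N → Step d) :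
    ∏ j, weight k p a b c (s j) = p ^ count upInd (extend s) N *
      a ^ count (plusInd k) (extend s) N * b ^ count (minusInd k) (extend s) N *
      c ^ count (sideInd k) (extend s) N := by
  have : ∏ j, weight k p a b c (s j) = ∏ j ∈ Finset.range N, weight k p a b c (extend s j) := by
    rw [Finset.prod_range]
    simp [extend]
  rw [this]
  simp only [weight, count, Finset.prod_mul_distrib, Finset.prod_pow_eq_pow_sum]

lemma sum_weight {k : ℕ} (hk : k ≤ d) (p a b c : ℝ) :
    ∑ s : Step d, weight k p a b c s = p + k * (a + b) + 2 * (d - k : ℕ) * c := by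
  have hin : ∀ i : Fin d, weight k p a b c (some (i, true)) + weight k p a b c (some (i, false)) =
      if (i : ℕ) < k then a + b else 2 * c := by
    intro i
    by_cases hi : (i : ℕ) < k <;> simp [weight, upInd, plusInd, minusInd, sideInd, hi, two_mul]
  rw [Fintype.sum_option, Fintype.sum_prod_type]
  simp only [Fintype.sum_bool, hin]
  have h0 : weight k p a b c (none : Step d) = p := by
    simp [weight, upInd, plusInd, minusInd, sideInd]
  rw [h0, Fin.sum_univ_eq_sum_range (fun i => if i < k then a + b else 2 * c) d,
    ← Finset.sum_range_add_sum_Ico _ hk,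
    Finset.sum_congr rfl (g := fun _ => a + b) fun i hi => if_pos (Finset.mem_range.1 hi),
    Finset.sum_congr rfl (g := fun _ => 2 * c) fun i hi =>
      if_neg (not_lt.2 (Finset.mem_Ico.1 hi).1)]
  simp
  ring

lemma weight_nonneg (k : ℕ) {p a b c : ℝ} (hp : 0 ≤ p) (ha : 0 ≤ a) (hb : 0 ≤ b) (hc : 0 ≤ c)
    (s : Step d) : 0 ≤ weight k p a b c s := by
  unfold weight
  positivity

end Counting

/-- Hypotheses on the parameters under which the number of admissible paths is controlled. -/
structure Params (α : ℝ) (d k : ℕ) (p r a b c : ℝ) : Prop where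
  p_pos : 0 < p
  r_pos : 0 < r
  r_le_one : r ≤ 1
  a_nonneg : 0 ≤ a
  b_nonneg : 0 ≤ b
  sq_le : r ^ 2 ≤ a * b
  rpow_le : r ^ (1 - α) ≤ b
  le_c : r ≤ c
  sum_le_one : p + k * (a + b) + 2 * (d - k : ℕ) * c ≤ 1

lemma pow_le_of_drift {α r a b c : ℝ} (hα : 0 ≤ α) (hr : 0 < r) (hr1 : r ≤ 1) (ha : 0 ≤ a)
    (hb : 0 ≤ b) (hsq : r ^ 2 ≤ a * b) (hrp : r ^ (1 - α) ≤ b) (hrc : r ≤ c) {u x y z : ℕ}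
    (h : (1 + α) * x + (1 - α) * y + z ≤ (u : ℝ)) :
    r ^ u ≤ a ^ x * b ^ y * c ^ z + b ^ x * a ^ y * c ^ z := by
  have hc : 0 ≤ c := hr.le.trans hrc
  have key : ∀ m e : ℕ, 2 * m + (1 - α) * e + z ≤ (u : ℝ) →
      r ^ u ≤ (a * b) ^ m * b ^ e * c ^ z := by
    intro m e hme
    calc r ^ u = r ^ (u : ℝ) := (Real.rpow_natCast r u).symm
      _ ≤ r ^ (((2 * m : ℕ) : ℝ) + (1 - α) * e + (z : ℝ)) :=
        Real.rpow_le_rpow_of_exponent_ge hr hr1 (by push_cast; exact hme)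
      _ = (r ^ 2) ^ m * (r ^ (1 - α)) ^ e * r ^ z := by
        rw [Real.rpow_add hr, Real.rpow_add hr, Real.rpow_natCast, Real.rpow_natCast,
          Real.rpow_mul hr.le, Real.rpow_natCast, pow_mul]
      _ ≤ (a * b) ^ m * b ^ e * c ^ z := by gcongr
  rcases le_total x y with hxy | hxy
  · obtain ⟨e, rfl⟩ := Nat.exists_eq_add_of_le hxy
    refine (key x e (by push_cast at h; linarith)).trans ?_
    rw [mul_pow, pow_add, mul_assoc (a ^ x)]
    exact le_add_of_nonneg_right (by positivity)
  · obtain ⟨e, rfl⟩ := Nat.exists_eq_add_of_le hxy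
    have : 0 ≤ α * e := by positivity
    refine (key y e (by push_cast at h; nlinarith)).trans ?_
    have heq : (a * b) ^ y * b ^ e * c ^ z = b ^ (y + e) * a ^ y * c ^ z := by
      rw [mul_pow, pow_add]; ring
    rw [heq]
    exact le_add_of_nonneg_left (by positivity)

section Probability

variable {d k : ℕ} {α p r a b c : ℝ}

lemma pow_upCount_le (hα0 : 0 ≤ α) (hα1 : α < 1) (hpar : Params α d k p r a b c) {ρ : ℝ}
    (hρ : 0 < ρ) (hρ1 : ρ ≤ 1) {N : ℕ} (s : Fin N → Step d)
    (hs : IsGood α (etaK d k) (extend s) N) :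
    (ρ * (p * r)) ^ count upInd (extend s) N ≤ (ρ ^ ((1 - α) / (2 - α))) ^ N *
      (∏ j, weight k p a b c (s j) + ∏ j, weight k p b a c (s j)) := by
  have hp := hpar.p_pos
  have hr := hpar.r_pos
  have hcount := count_add k (extend s) N
  have hheight := pos_height_le (α := α) k (extend s) N
  have h0 : (0 : ℝ) ≤ (pos α (etaK d k) (extend s) N N).2 := by exact_mod_cast hs.2
  rw [prod_weight, prod_weight]
  generalize count upInd (extend s) N = u at *
  generalize count (plusInd k) (extend s) N = x at *
  generalize count (minusInd k) (extend s) N = y at *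
  generalize count (sideInd k) (extend s) N = z at *
  have hmain := pow_le_of_drift hα0 hr hpar.r_le_one hpar.a_nonneg hpar.b_nonneg hpar.sq_le
    hpar.rpow_le hpar.le_c (u := u) (x := x) (y := y) (z := z) (by linarith)
  have hdecay : ρ ^ u ≤ (ρ ^ ((1 - α) / (2 - α))) ^ N := by
    rw [← Real.rpow_natCast, ← Real.rpow_natCast, ← Real.rpow_mul hρ.le]
    refine Real.rpow_le_rpow_of_exponent_ge hρ hρ1 ?_
    have hN : (N : ℝ) = u + x + y + z := by exact_mod_cast hcount.symm
    rw [div_mul_eq_mul_div, div_le_iff₀ (by linarith), hN]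
    have hx : 0 ≤ α * x := by positivity
    have hz : 0 ≤ α * z := by positivity
    nlinarith
  rw [mul_pow, mul_pow]
  calc ρ ^ u * (p ^ u * r ^ u)
      ≤ (ρ ^ ((1 - α) / (2 - α))) ^ N *
        (p ^ u * (a ^ x * b ^ y * c ^ z + b ^ x * a ^ y * c ^ z)) := by gcongr
    _ = _ := by ring

lemma measure_goodEvent_le (hα0 : 0 ≤ α) (hα1 : α < 1) (hk : k ≤ d)
    (hpar : Params α d k p r a b c) {ρ : ℝ} (hρ : 0 < ρ) (hρ1 : ρ ≤ 1)
    {P : Measure (Config d)} (hP : IsBernoulli (1 - ρ * (p * r)) P) (N : ℕ) :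
    P (goodEvent α (etaK d k) N) ≤ ENNReal.ofReal (2 * (ρ ^ ((1 - α) / (2 - α))) ^ N) := by
  classical
  have hp := hpar.p_pos
  have hr := hpar.r_pos
  have hc : 0 ≤ c := hr.le.trans hpar.le_c
  set κ := ρ ^ ((1 - α) / (2 - α))
  have hκ0 : 0 ≤ κ := by positivity
  have hw : ∀ s : Step d, 0 ≤ weight k p a b c s :=
    weight_nonneg k hp.le hpar.a_nonneg hpar.b_nonneg hc
  have hw' : ∀ s : Step d, 0 ≤ weight k p b a c s :=
    weight_nonneg k hp.le hpar.b_nonneg hpar.a_nonneg hc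
  let g : (Fin N → Step d) → ℝ := fun s =>
    κ ^ N * (∏ j, weight k p a b c (s j) + ∏ j, weight k p b a c (s j))
  have hg : ∀ s, 0 ≤ g s := fun s =>
    mul_nonneg (pow_nonneg hκ0 N)
      (add_nonneg (Finset.prod_nonneg fun j _ => hw _) (Finset.prod_nonneg fun j _ => hw' _))
  have hcyl : ∀ s : {s : Fin N → Step d // IsGood α (etaK d k) (extend s) N},
      P {ω | ∀ x ∈ upSites α (etaK d k) (extend s.1) N, ω x = false} ≤
        ENNReal.ofReal (g s.1) := by
    intro s
    rw [hP.2 _ fun _ => false]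
    simp only [Bool.false_eq_true, if_false, Finset.prod_const]
    rw [card_upSites s.2, _root_.sub_sub_cancel, ← ENNReal.ofReal_pow (by positivity)]
    exact ENNReal.ofReal_le_ofReal (pow_upCount_le hα0 hα1 hpar hρ hρ1 s.1 s.2)
  have hpow : ∀ w : Step d → ℝ, (∀ s, 0 ≤ w s) → ∑ s, w s ≤ 1 →
      ∑ s : Fin N → Step d, ∏ j, w (s j) ≤ 1 := by
    intro w h0 h1
    rw [← Fintype.sum_pow]
    exact pow_le_one₀ (Finset.sum_nonneg fun s _ => h0 s) h1
  calc P (goodEvent α (etaK d k) N)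
      ≤ ∑ s : {s : Fin N → Step d // IsGood α (etaK d k) (extend s) N},
          ENNReal.ofReal (g s.1) :=
        (measure_iUnion_fintype_le _ _).trans (Finset.sum_le_sum fun s _ => hcyl s)
    _ = ENNReal.ofReal (∑ s : {s : Fin N → Step d // IsGood α (etaK d k) (extend s) N}, g s.1) :=
        (ENNReal.ofReal_sum_of_nonneg fun s _ => hg s.1).symm
    _ ≤ ENNReal.ofReal (∑ s, g s) := by
        refine ENNReal.ofReal_le_ofReal ?_
        exact (Finset.sum_map Finset.univ (Function.Embedding.subtype _) g).symm.trans_le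
          (Finset.sum_le_univ_sum_of_nonneg hg)
    _ ≤ ENNReal.ofReal (2 * κ ^ N) := by
        refine ENNReal.ofReal_le_ofReal ?_
        simp only [g]
        rw [← Finset.mul_sum, Finset.sum_add_distrib, mul_comm]
        have h1 := hpow _ hw ((sum_weight hk p a b c).trans_le hpar.sum_le_one)
        have h2 := hpow _ hw' ((sum_weight hk p b a c).trans_le (by
          rw [add_comm b a]; exact hpar.sum_le_one))
        gcongr
        linarith

lemma measure_LIP_ne_zero (hα0 : 0 ≤ α) (hα1 : α < 1) (hk : k ≤ d)
    (hpar : Params α d k p r a b c) {ρ : ℝ} (hρ : 0 < ρ) (hρ1 : ρ < 1)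
    {P : Measure (Config d)} (hP : IsBernoulli (1 - ρ * (p * r)) P) :
    P (LIP α (etaK d k)) ≠ 0 := by
  have := hP.1
  have hκ0 : 0 ≤ ρ ^ ((1 - α) / (2 - α)) := by positivity
  have hκ1 : ρ ^ ((1 - α) / (2 - α)) < 1 :=
    Real.rpow_lt_one hρ.le hρ1 (div_pos (by linarith) (by linarith))
  have hsummable : ∑' N, P (goodEvent α (etaK d k) N) ≠ ∞ := by
    refine ne_top_of_le_ne_top ?_
      (ENNReal.tsum_le_tsum (measure_goodEvent_le hα0 hα1 hk hpar hρ hρ1.le hP))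
    exact ((summable_geometric_of_lt_one hκ0 hκ1).mul_left 2).tsum_ofReal_ne_top
  have hae : ∀ᵐ ω ∂P, ω ∈ LIP α (etaK d k) := by
    filter_upwards [ae_eventually_notMem hsummable] with ω hω
    obtain ⟨M, hM⟩ := eventually_atTop.1 hω
    refine mem_LIP_of_bddAbove ⟨M, fun n hn => ?_⟩
    by_contra! hlt
    obtain ⟨N, t, rfl, hN⟩ := exists_goodEvent_of_reach (by omega) hn
    refine hM N ?_ hN
    have hcount := count_add k t N
    have hheight := pos_height_le (α := α) k t N
    have : (M : ℝ) < (pos α (etaK d k) t N N).2 := by exact_mod_cast hlt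
    have hle : (count upInd t N : ℝ) ≤ N := by exact_mod_cast (by omega)
    have h1 : 0 ≤ (1 + α) * count (plusInd k) t N := by positivity
    have h2 : 0 ≤ (1 - α) * count (minusInd k) t N :=
      mul_nonneg (by linarith) (Nat.cast_nonneg _)
    have h3 : (0 : ℝ) ≤ count (sideInd k) t N := Nat.cast_nonneg _
    have : (M : ℝ) ≤ N := by linarith
    exact_mod_cast this
  intro h0
  obtain ⟨ω, hω, hω'⟩ := (hae.and (measure_eq_zero_iff_ae_notMem.1 h0)).exists
  exact hω' hω

end Probability

end LipschitzPercolation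

/-- General lower bound with free parameters: if
`p₁, p₂, p₃, p₄ ∈ (0,1)` with `p₁ + p₂ + p₃ + p₄ = 1`, then for `k = 0,…,d`,
`q_L(α,d,k) ≥ min{(1/k)·p₁·√(p₂p₃), p₁·(p₃/k)^{1/(1−α)}, p₁p₄/(2(d−k))}`,
computed in `[0,∞]` so that terms with vanishing denominator are `+∞`. -/
theorem qL_lower_bound_with_parameters
    {d : ℕ} (hd : 1 ≤ d) (α : ℝ) (hα : α ∈ Set.Ico (0 : ℝ) 1) (k : ℕ) (hk : k ≤ d)
    (p₁ p₂ p₃ p₄ : ℝ) (h₁ : p₁ ∈ Set.Ioo (0 : ℝ) 1) (h₂ : p₂ ∈ Set.Ioo (0 : ℝ) 1)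
    (h₃ : p₃ ∈ Set.Ioo (0 : ℝ) 1) (h₄ : p₄ ∈ Set.Ioo (0 : ℝ) 1)
    (hsum : p₁ + p₂ + p₃ + p₄ = 1)
    (P : ℝ → Measure (Config d)) (hP : ∀ p ∈ Set.Icc (0 : ℝ) 1, IsBernoulli p (P p))
    (pc : ℝ) (hpc : IsCriticalProb P α (etaK d k) pc) :
    min (min (ENNReal.ofReal (p₁ * Real.sqrt (p₂ * p₃)) / (k : ℝ≥0∞))
          (ENNReal.ofReal p₁ * (ENNReal.ofReal p₃ / (k : ℝ≥0∞)) ^ ((1 : ℝ) / (1 - α))))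
        (ENNReal.ofReal (p₁ * p₄) / (2 * ((d - k : ℕ) : ℝ≥0∞))) ≤
      ENNReal.ofReal (1 - pc) := by
  obtain ⟨hα0, hα1⟩ := hα
  obtain ⟨h₁0, h₁1⟩ := h₁
  obtain ⟨h₂0, h₂1⟩ := h₂
  obtain ⟨h₃0, h₃1⟩ := h₃
  obtain ⟨h₄0, h₄1⟩ := h₄
  obtain ⟨⟨hpc0, hpc1⟩, hsub, -⟩ := hpc
  by_contra! hlt
  obtain ⟨q', hq'0, hq'pc, hq'⟩ := ENNReal.lt_iff_exists_real_btwn.1 hlt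
  simp only [lt_min_iff] at hq'
  obtain ⟨⟨hA, hB⟩, hC⟩ := hq'
  have hqpc : 1 - pc < q' := (ENNReal.ofReal_lt_ofReal_iff_of_nonneg (by linarith)).1 hq'pc
  have hq'pos : 0 < q' := by linarith
  obtain ⟨q, hq1, hq2⟩ := exists_between hqpc
  have hq0 : 0 < q := by linarith
  set r := q' / p₁ with hr
  have hr0 : 0 < r := by positivity
  have hpr : p₁ * r = q' := by rw [hr]; field_simp
  have hsqrt : k ≠ 0 → r ≤ Real.sqrt (p₂ * p₃) / k := by
    intro hk0
    have hkpos : (0 : ℝ) < k := by positivity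
    rw [← ENNReal.ofReal_natCast, ← ENNReal.ofReal_div_of_pos hkpos,
      ENNReal.ofReal_lt_ofReal_iff_of_nonneg hq'0] at hA
    rw [hr, div_le_iff₀ h₁0]
    refine hA.le.trans_eq (by ring)
  have hrpow : k ≠ 0 → r ^ (1 - α) ≤ p₃ / k := by
    intro hk0
    have hkpos : (0 : ℝ) < k := by positivity
    rw [← ENNReal.ofReal_natCast, ← ENNReal.ofReal_div_of_pos hkpos,
      ENNReal.ofReal_rpow_of_pos (by positivity), ← ENNReal.ofReal_mul h₁0.le,
      ENNReal.ofReal_lt_ofReal_iff_of_nonneg hq'0, ← div_lt_iff₀' h₁0] at hB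
    calc r ^ (1 - α) ≤ ((p₃ / k) ^ ((1 : ℝ) / (1 - α))) ^ (1 - α) :=
          Real.rpow_le_rpow hr0.le hB.le (by linarith)
      _ = p₃ / k := by
          rw [← Real.rpow_mul (by positivity), one_div_mul_cancel (by linarith), Real.rpow_one]
  have hside : d - k ≠ 0 → r ≤ p₄ / (2 * (d - k : ℕ)) := by
    intro hdk
    have hpos : (0 : ℝ) < 2 * (d - k : ℕ) := by positivity
    rw [← ENNReal.ofReal_natCast, ← ENNReal.ofReal_ofNat, ← ENNReal.ofReal_mul (by norm_num),
      ← ENNReal.ofReal_div_of_pos hpos, ENNReal.ofReal_lt_ofReal_iff_of_nonneg hq'0] at hC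
    rw [hr, div_le_iff₀ h₁0]
    refine hC.le.trans_eq (by ring)
  have hr1 : r ≤ 1 := by
    by_cases hk0 : k = 0
    · have hd1 : (1 : ℝ) ≤ (d - k : ℕ) := by exact_mod_cast (by omega)
      refine (hside (by omega)).trans ((div_le_one (by positivity)).2 (by linarith))
    · have hk1 : (1 : ℝ) ≤ k := by exact_mod_cast Nat.one_le_iff_ne_zero.2 hk0
      refine (hsqrt hk0).trans ((div_le_one (by positivity)).2 (le_trans ?_ hk1))
      exact Real.sqrt_le_one.2 (by nlinarith)
  have hpar : LipschitzPercolation.Params α d k p₁ r (if k = 0 then 1 else p₂ / k)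
      (if k = 0 then 1 else p₃ / k) (if d - k = 0 then 1 else p₄ / (2 * (d - k : ℕ))) := by
    refine ⟨h₁0, hr0, hr1, by positivity, by positivity, ?_, ?_, ?_, ?_⟩
    · split_ifs with hk0
      · exact (pow_le_one₀ hr0.le hr1).trans_eq (one_mul 1).symm
      · calc r ^ 2 ≤ (Real.sqrt (p₂ * p₃) / k) ^ 2 := pow_le_pow_left₀ hr0.le (hsqrt hk0) 2
          _ = p₂ / k * (p₃ / k) := by
            rw [div_pow, Real.sq_sqrt (by positivity)]; ring
    · split_ifs with hk0
      · exact Real.rpow_le_one hr0.le hr1 (by linarith)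
      · exact hrpow hk0
    · split_ifs with hdk
      · exact hr1
      · exact hside hdk
    · have e1 : (k : ℝ) * ((if k = 0 then 1 else p₂ / k) + (if k = 0 then 1 else p₃ / k)) ≤
          p₂ + p₃ := by
        split_ifs with hk0
        · simp only [hk0, Nat.cast_zero, zero_mul]
          positivity
        · field_simp
          exact le_rfl
      have e2 : 2 * ((d - k : ℕ) : ℝ) * (if d - k = 0 then 1 else p₄ / (2 * (d - k : ℕ))) ≤
          p₄ := by
        split_ifs with hdk
        · simp only [hdk, Nat.cast_zero, mul_zero, zero_mul]
          exact h₄0.le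
        · field_simp
          exact le_rfl
      linarith
  have hq'1 : q' ≤ 1 := by
    rw [← hpr]
    exact mul_le_one₀ h₁1.le hr0.le hr1
  have hq : 1 - q / q' * (p₁ * r) = 1 - q := by rw [hpr]; field_simp
  refine LipschitzPercolation.measure_LIP_ne_zero hα0 hα1 hk hpar (ρ := q / q') (by positivity)
    ((div_lt_one hq'pos).2 hq2) (P := P (1 - q)) ?_ (hsub (1 - q) (by linarith) (by linarith))
  rw [hq]
  exact hP _ ⟨by linarith, by linarith⟩
end

section
/- Continuity of the critical probability of ρ-percolation: for every d ∈ ℕ, the map ρ ↦ q_c(ρ,d) is continuous on [0,1). -/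
open MeasureTheory Filter ENNReal

/-- Site-percolation configurations on `ℤ^d`: a site is open iff its value is `true`. -/
abbrev ConfigD (d : ℕ) := (Fin d → ℤ) → Bool

/-- An oriented nearest-neighbour path in `ℤ^d` started at the origin: every step adds
one standard basis vector. -/
def IsOrientedPath {d : ℕ} (x : ℕ → Fin d → ℤ) : Prop :=
  x 0 = 0 ∧ ∀ n : ℕ, ∃ i : Fin d, x (n + 1) = x n + Pi.single i 1

/-- The event that `ρ`-percolation occurs: some oriented nearest-neighbour path started at
the origin satisfies `liminf_n (1/n) ∑_{i=1}^n 1_{x̄ᵢ closed} ≥ ρ`. -/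
def RhoPerc {d : ℕ} (ρ : ℝ) : Set (ConfigD d) :=
  {ω | ∃ x : ℕ → Fin d → ℤ, IsOrientedPath x ∧
    ρ ≤ atTop.liminf fun n : ℕ =>
      (∑ i ∈ Finset.Icc 1 n, if ω (x i) then (0 : ℝ) else 1) / n}

section BernoulliMeasures

variable {ι : Type*}

/-- The events that all sites of a finite set are open generate the product `σ`-algebra. -/
lemma generateFrom_forall_eq_true :
    (MeasurableSpace.pi : MeasurableSpace (ι → Bool)) =
      MeasurableSpace.generateFrom
        (Set.range fun s : Finset ι => {ω : ι → Bool | ∀ x ∈ s, ω x = true}) := by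
  apply le_antisymm
  · refine iSup_le fun i => ?_
    rw [← measurable_iff_comap_le]
    refine @measurable_to_bool _ (_) _ (MeasurableSpace.measurableSet_generateFrom ⟨{i}, ?_⟩)
    ext ω
    simp
  · refine MeasurableSpace.generateFrom_le ?_
    rintro _ ⟨s, rfl⟩
    have h : {ω : ι → Bool | ∀ x ∈ s, ω x = true} = ⋂ x ∈ s, (fun ω => ω x) ⁻¹' {true} := by
      ext ω
      simp
    simp only [h]
    exact s.measurableSet_biInter fun i _ => measurable_pi_apply i (measurableSet_singleton _)

lemma measure_ext_of_forall_eq_true {μ ν : Measure (ι → Bool)}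
    [IsProbabilityMeasure μ] [IsProbabilityMeasure ν]
    (h : ∀ s : Finset ι, μ {ω | ∀ x ∈ s, ω x = true} = ν {ω | ∀ x ∈ s, ω x = true}) :
    μ = ν := by
  classical
  refine ext_of_generate_finite _ generateFrom_forall_eq_true ?_ ?_ (by simp)
  · rintro _ ⟨s, rfl⟩ _ ⟨t, rfl⟩ -
    refine ⟨s ∪ t, ?_⟩
    ext ω
    simp only [Finset.mem_union, Set.mem_ofPred_eq, Set.mem_inter_iff]
    grind
  · rintro _ ⟨s, rfl⟩
    exact h s

namespace IsBernoulli

variable {p r : ℝ} {μ ν : Measure (ι → Bool)}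

lemma measure_forall_eq_true (h : IsBernoulli p μ) (s : Finset ι) :
    μ {ω | ∀ x ∈ s, ω x = true} = ENNReal.ofReal p ^ s.card := by
  simpa using h.2 s fun _ => true

lemma measure_eq_true (h : IsBernoulli p μ) (x : ι) :
    μ {ω | ω x = true} = ENNReal.ofReal p := by
  simpa using h.measure_forall_eq_true {x}

lemma measure_eq_false (h : IsBernoulli p μ) (x : ι) :
    μ {ω | ω x = false} = ENNReal.ofReal (1 - p) := by
  simpa using h.2 {x} fun _ => false

/-- The coordinates of a Bernoulli configuration are independent. -/
lemma iIndepFun_eval (h : IsBernoulli p μ) :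
    ProbabilityTheory.iIndepFun (fun (x : ι) (ω : ι → Bool) => ω x) μ := by
  have := h.1
  have hm (x : ι) : Measurable fun ω : ι → Bool => ω x := measurable_pi_apply x
  have (x : ι) : IsProbabilityMeasure (μ.map fun ω : ι → Bool => ω x) :=
    Measure.isProbabilityMeasure_map (hm x).aemeasurable
  rw [ProbabilityTheory.iIndepFun_iff_map_fun_eq_infinitePi_map hm]
  change μ.map id = _
  rw [Measure.map_id]
  refine measure_ext_of_forall_eq_true fun s => ?_
  have hs : {ω : ι → Bool | ∀ x ∈ s, ω x = true} = Set.pi s fun _ => {true} := by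
    ext ω
    simp
  rw [h.measure_forall_eq_true, hs, Measure.infinitePi_pi _ fun _ _ => measurableSet_singleton _]
  refine (Finset.prod_eq_pow_card fun x _ => ?_).symm
  rw [Measure.map_apply (hm x) (measurableSet_singleton _)]
  exact h.measure_eq_true x

lemma measurable_and :
    Measurable fun z : (ι → Bool) × (ι → Bool) => fun x => z.1 x && z.2 x := by
  refine measurable_pi_lambda _ fun x => ?_
  have hx : Measurable fun z : (ι → Bool) × (ι → Bool) => (z.1 x, z.2 x) := by fun_prop
  exact (measurable_of_countable fun b : Bool × Bool => b.1 && b.2).comp hx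

/-- Independent thinning of a Bernoulli configuration is again Bernoulli. -/
lemma map_and_prod {π : Measure (ι → Bool)} (hp : 0 ≤ p) (hμ : IsBernoulli p μ)
    (hν : IsBernoulli r ν) (hπ : IsBernoulli (p * r) π) :
    (μ.prod ν).map (fun z x => z.1 x && z.2 x) = π := by
  have := hμ.1
  have := hν.1
  have := hπ.1
  have := Measure.isProbabilityMeasure_map (μ := μ.prod ν) (measurable_and (ι := ι)).aemeasurable
  refine measure_ext_of_forall_eq_true fun s => ?_
  have hs : MeasurableSet {ω : ι → Bool | ∀ x ∈ s, ω x = true} := by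
    rw [generateFrom_forall_eq_true]
    exact MeasurableSpace.measurableSet_generateFrom ⟨s, rfl⟩
  have hpre : (fun z : (ι → Bool) × (ι → Bool) => fun x => z.1 x && z.2 x) ⁻¹'
      {ω | ∀ x ∈ s, ω x = true} =
      {ω | ∀ x ∈ s, ω x = true} ×ˢ {ω | ∀ x ∈ s, ω x = true} := by
    ext z
    simp only [Set.mem_preimage, Set.mem_ofPred_eq, Bool.and_eq_true, Set.mem_prod]
    grind
  rw [Measure.map_apply measurable_and hs, hpre, Measure.prod_prod, hμ.measure_forall_eq_true,
    hν.measure_forall_eq_true, hπ.measure_forall_eq_true, ENNReal.ofReal_mul hp, mul_pow]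

end IsBernoulli

end BernoulliMeasures

/-- A one-sided strong law of large numbers for independent, centred variables with values in
`[-1, 1]`, which need not be identically distributed. -/
lemma ae_eventually_sum_lt {Ω : Type*} [MeasurableSpace Ω] {μ : Measure Ω}
    [IsProbabilityMeasure μ] {X : ℕ → Ω → ℝ} (hX : ∀ i, Measurable (X i))
    (hind : ProbabilityTheory.iIndepFun X μ) (hb : ∀ i ω, X i ω ∈ Set.Icc (-1 : ℝ) 1)
    (h0 : ∀ i, ∫ ω, X i ω ∂μ = 0) {δ : ℝ} (hδ : 0 < δ) :
    ∀ᵐ ω ∂μ, ∀ᶠ n : ℕ in atTop, ∑ i ∈ Finset.range n, X i ω < δ * n := by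
  have key (n : ℕ) : μ {ω | δ * n ≤ ∑ i ∈ Finset.range n, X i ω} ≤
      ENNReal.ofReal (Real.exp (-δ ^ 2 / 2) ^ n) := by
    have hn := ProbabilityTheory.HasSubgaussianMGF.measure_sum_range_ge_le_of_iIndepFun hind
      (n := n) (c := 1) (ε := δ * n)
      (fun i _ => by
        have := ProbabilityTheory.hasSubgaussianMGF_of_mem_Icc_of_integral_eq_zero
          (hX i).aemeasurable (ae_of_all _ (hb i)) (h0 i)
        convert this using 1
        norm_num [← NNReal.coe_inj])
      (by positivity)
    rw [← ENNReal.ofReal_toReal (measure_ne_top μ _)]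
    refine ENNReal.ofReal_le_ofReal (hn.trans_eq ?_)
    rw [← Real.exp_nat_mul]
    congr 1
    rcases eq_or_ne n 0 with rfl | h
    · simp
    · have : (n : ℝ) ≠ 0 := by exact_mod_cast h
      push_cast
      field_simp
  have hsum : ∑' n : ℕ, μ {ω | δ * (n : ℝ) ≤ ∑ i ∈ Finset.range n, X i ω} ≠ ∞ := by
    refine ne_top_of_le_ne_top ?_ (ENNReal.tsum_le_tsum key)
    refine (summable_geometric_of_lt_one (Real.exp_pos _).le ?_).tsum_ofReal_ne_top
    rw [Real.exp_lt_one_iff]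
    have := pow_pos hδ 2
    linarith
  filter_upwards [ae_eventually_notMem hsum] with ω hω
  filter_upwards [hω] with n hn
  simpa using hn

lemma le_liminf_div_iff {S : ℕ → ℝ} (h0 : ∀ n, 0 ≤ S n) (hS : ∀ n, S n ≤ n) {ρ : ℝ} :
    ρ ≤ atTop.liminf (fun n : ℕ => S n / n) ↔
      ∀ k : ℕ, ∀ᶠ n : ℕ in atTop, (ρ - 1 / (k + 1)) * n ≤ S n := by
  have hlo : IsBoundedUnder (· ≥ ·) atTop fun n : ℕ => S n / n :=
    isBoundedUnder_of ⟨0, fun n => div_nonneg (h0 n) n.cast_nonneg⟩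
  have hhi : IsBoundedUnder (· ≤ ·) atTop fun n : ℕ => S n / n :=
    isBoundedUnder_of ⟨1, fun n => div_le_one_of_le₀ (hS n) n.cast_nonneg⟩
  constructor
  · intro h k
    have hk : (0 : ℝ) < 1 / (k + 1) := Nat.one_div_pos_of_nat
    filter_upwards [eventually_lt_of_lt_liminf (lt_of_lt_of_le (sub_lt_self ρ hk) h) hlo,
      eventually_gt_atTop 0] with n hn hpos
    exact ((lt_div_iff₀ (by exact_mod_cast hpos)).1 hn).le
  · intro h
    refine le_of_forall_pos_sub_le fun δ hδ => ?_
    obtain ⟨k, hk⟩ := exists_nat_one_div_lt hδ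
    refine le_liminf_of_le hhi.isCoboundedUnder_ge ?_
    filter_upwards [h k, eventually_gt_atTop 0] with n hn hpos
    have hpos' : (0 : ℝ) < n := by exact_mod_cast hpos
    rw [le_div_iff₀ hpos']
    exact le_trans (by gcongr) hn

section Percolation

variable {d : ℕ}

lemma IsOrientedPath.injective {x : ℕ → Fin d → ℤ} (hx : IsOrientedPath x) :
    Function.Injective x := by
  have h (n : ℕ) : ∑ j, x n j = n := by
    induction n with
    | zero => simp [hx.1]
    | succ n ih =>
      obtain ⟨i, hi⟩ := hx.2 n
      simp [hi, Finset.sum_add_distrib, ih]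
  intro m n hmn
  have := h m
  rw [hmn, h n] at this
  exact_mod_cast this.symm

lemma mem_RhoPerc_iff {ω : ConfigD d} {ρ : ℝ} :
    ω ∈ RhoPerc ρ ↔ ∃ x : ℕ → Fin d → ℤ, IsOrientedPath x ∧
      ∀ k : ℕ, ∀ᶠ n : ℕ in atTop, (ρ - 1 / (k + 1)) * n ≤
        ∑ i ∈ Finset.range n, if ω (x (i + 1)) then (0 : ℝ) else 1 := by
  refine exists_congr fun x => and_congr_right fun _ => ?_
  have h (n : ℕ) : (∑ i ∈ Finset.Icc 1 n, if ω (x i) then (0 : ℝ) else 1) =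
      ∑ i ∈ Finset.range n, if ω (x (i + 1)) then (0 : ℝ) else 1 := by
    rw [Finset.range_eq_Ico, Finset.sum_Ico_add' (fun i => if ω (x i) then (0 : ℝ) else 1)]
    rfl
  simp only [h]
  refine le_liminf_div_iff (fun n => Finset.sum_nonneg fun i _ => by split_ifs <;> simp)
    fun n => ?_
  calc _ ≤ ∑ i ∈ Finset.range n, (1 : ℝ) :=
        Finset.sum_le_sum fun i _ => by split_ifs <;> simp
    _ = n := by simp

lemma RhoPerc_anti {ρ ρ' : ℝ} (h : ρ ≤ ρ') : RhoPerc (d := d) ρ' ⊆ RhoPerc ρ :=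
  fun _ ⟨x, hx, hl⟩ => ⟨x, hx, h.trans hl⟩

lemma RhoPerc_zero (hd : 1 ≤ d) : RhoPerc (d := d) 0 = Set.univ := by
  refine Set.eq_univ_of_forall fun ω => mem_RhoPerc_iff.2
    ⟨fun n => Pi.single ⟨0, hd⟩ (n : ℤ), ⟨by simp, fun n => ⟨⟨0, hd⟩, ?_⟩⟩, fun k => ?_⟩
  · rw [← Pi.single_add]
    simp
  · refine Eventually.of_forall fun n => ?_
    have hk : (0 : ℝ) < 1 / (k + 1) := Nat.one_div_pos_of_nat
    have hs : 0 ≤ ∑ i ∈ Finset.range n,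
        if ω (Pi.single ⟨0, hd⟩ ((i + 1 : ℕ) : ℤ)) then (0 : ℝ) else 1 :=
      Finset.sum_nonneg fun i _ => by split_ifs <;> simp
    exact le_trans (mul_nonpos_of_nonpos_of_nonneg (by linarith) n.cast_nonneg) hs

/-- Closing each open site independently with probability `1 - r` almost surely improves the
density of closed sites along a given path. -/
lemma ae_and_mem_RhoPerc {r ρ : ℝ} (hr : r ∈ Set.Icc (0 : ℝ) 1) {ν : Measure (ConfigD d)}
    (hν : IsBernoulli r ν) {ω : ConfigD d} (hω : ω ∈ RhoPerc ρ) :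
    ∀ᵐ η ∂ν, (fun y => ω y && η y) ∈ RhoPerc (ρ + (1 - r) * (1 - ρ)) := by
  have := hν.1
  obtain ⟨x, hx, hl⟩ := mem_RhoPerc_iff.1 hω
  let g (i : ℕ) (b : Bool) : ℝ :=
    if ω (x (i + 1)) then (1 - r) - (if b then 0 else 1) else 0
  have hinj : Function.Injective fun i => x (i + 1) := hx.injective.comp (add_left_injective 1)
  have hmeas (i : ℕ) : Measurable fun η : ConfigD d => g i (η (x (i + 1))) :=
    (measurable_of_countable (g i)).comp (measurable_pi_apply _)
  have hind : ProbabilityTheory.iIndepFun (fun i (η : ConfigD d) => g i (η (x (i + 1)))) ν :=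
    (hν.iIndepFun_eval.precomp hinj).comp g fun i => measurable_of_countable _
  have hb (i : ℕ) (η : ConfigD d) : g i (η (x (i + 1))) ∈ Set.Icc (-1 : ℝ) 1 := by
    obtain ⟨h0, h1⟩ := hr
    dsimp only [g]
    split_ifs <;> constructor <;> linarith
  have hmean (i : ℕ) : ∫ η, g i (η (x (i + 1))) ∂ν = 0 := by
    by_cases ho : ω (x (i + 1)) = true
    · have hset : MeasurableSet {η : ConfigD d | η (x (i + 1)) = false} :=
        (show Measurable fun η : ConfigD d => η (x (i + 1)) by fun_prop)
          (measurableSet_singleton false)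
      have hg : (fun η : ConfigD d => g i (η (x (i + 1)))) =
          fun η => (1 - r) - {η : ConfigD d | η (x (i + 1)) = false}.indicator 1 η := by
        ext η
        by_cases he : η (x (i + 1)) = true <;> simp [g, ho, he]
      have hint : Integrable
          ({η : ConfigD d | η (x (i + 1)) = false}.indicator (1 : ConfigD d → ℝ)) ν :=
        (integrable_indicator_iff hset).2 (integrable_const (1 : ℝ)).integrableOn
      rw [hg, integral_sub (integrable_const _) hint, integral_indicator_one hset, measureReal_def, hν.measure_eq_false,
        ENNReal.toReal_ofReal (by linarith [hr.2])]
      simp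
    · simp [g, ho]
  have hlln (k : ℕ) := ae_eventually_sum_lt hmeas hind hb hmean
    (δ := 1 / (2 * ((k : ℝ) + 1))) (by positivity)
  filter_upwards [ae_all_iff.2 hlln] with η hη
  refine mem_RhoPerc_iff.2 ⟨x, hx, fun k => ?_⟩
  filter_upwards [hη k, hl (2 * k + 1)] with n hn hn'
  have hsum : (∑ i ∈ Finset.range n,
      if (ω (x (i + 1)) && η (x (i + 1))) = true then (0 : ℝ) else 1) =
      r * (∑ i ∈ Finset.range n, if ω (x (i + 1)) then (0 : ℝ) else 1) + (1 - r) * n -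
        ∑ i ∈ Finset.range n, g i (η (x (i + 1))) := by
    have hc : (1 - r) * n = ∑ i ∈ Finset.range n, (1 - r) := by
      rw [Finset.sum_const, Finset.card_range, nsmul_eq_mul, mul_comm]
    rw [hc, Finset.mul_sum, ← Finset.sum_add_distrib, ← Finset.sum_sub_distrib]
    refine Finset.sum_congr rfl fun i _ => ?_
    by_cases ho : ω (x (i + 1)) = true <;> by_cases he : η (x (i + 1)) = true <;>
      simp [g, ho, he]
  rw [hsum]
  have hk : (1 : ℝ) / (((2 * k + 1 : ℕ) : ℝ) + 1) = 1 / (2 * ((k : ℝ) + 1)) := by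
    push_cast
    congr 1
    ring
  have hk' : (1 : ℝ) / ((k : ℝ) + 1) = 2 * (1 / (2 * ((k : ℝ) + 1))) := by
    field_simp
  rw [hk] at hn'
  rw [hk']
  have hδ : 0 ≤ 1 / (2 * ((k : ℝ) + 1)) * n := by positivity
  nlinarith [mul_le_mul_of_nonneg_left hn' hr.1, mul_nonneg (sub_nonneg.2 hr.2) hδ]

/-- If `ρ`-percolation has positive probability, then so does percolation at the improved
density after independently closing open sites. -/
lemma RhoPerc_ne_zero_of_thinning {p r ρ : ℝ} (hp : 0 ≤ p) (hr : r ∈ Set.Icc (0 : ℝ) 1)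
    {μ ν π : Measure (ConfigD d)} (hμ : IsBernoulli p μ) (hν : IsBernoulli r ν)
    (hπ : IsBernoulli (p * r) π) (h : μ (RhoPerc ρ) ≠ 0) :
    π (RhoPerc (ρ + (1 - r) * (1 - ρ))) ≠ 0 := by
  have := hμ.1
  have := hν.1
  intro h0
  apply h
  have hae : ∀ᵐ z ∂π, z ∉ RhoPerc (ρ + (1 - r) * (1 - ρ)) := measure_eq_zero_iff_ae_notMem.1 h0
  rw [← IsBernoulli.map_and_prod hp hμ hν hπ] at hae
  have hprod := Measure.ae_ae_of_ae_prod (ae_of_ae_map IsBernoulli.measurable_and.aemeasurable hae)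
  rw [measure_eq_zero_iff_ae_notMem]
  filter_upwards [hprod] with ω hω hmem
  obtain ⟨η, h₁, h₂⟩ := (hω.and (ae_and_mem_RhoPerc hr hν hmem)).exists
  exact h₁ h₂

end Percolation

/-- Continuity of the critical probability of `ρ`-percolation:
for every `d ≥ 1`, the map `ρ ↦ q_c(ρ,d)` is continuous on `[0,1)`, where `q_c(0,d) = 0`
and for `ρ ∈ (0,1]` the critical probability `q_c(ρ,d)` is characterized by:
`ρ`-percolation a.s. does not occur for `q < q_c(ρ,d)` and a.s. occurs for
`q > q_c(ρ,d)`. -/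
theorem qc_rho_percolation_continuous
    {d : ℕ} (hd : 1 ≤ d)
    (P : ℝ → Measure (ConfigD d)) (hP : ∀ p ∈ Set.Icc (0 : ℝ) 1, IsBernoulli p (P p))
    (qc : ℝ → ℝ) (hqc0 : qc 0 = 0)
    (hqc : ∀ ρ ∈ Set.Ioc (0 : ℝ) 1, qc ρ ∈ Set.Icc (0 : ℝ) 1 ∧
      (∀ q, 0 ≤ q → q < qc ρ → P (1 - q) (RhoPerc ρ) = 0) ∧
      (∀ q, qc ρ < q → q ≤ 1 → P (1 - q) (RhoPerc ρ) = 1)) :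
    ContinuousOn qc (Set.Ico 0 1) := by
  have hrange {ρ : ℝ} (hρ : ρ ∈ Set.Ico (0 : ℝ) 1) : qc ρ ∈ Set.Icc (0 : ℝ) 1 := by
    rcases hρ.1.eq_or_lt with rfl | h
    · simp [hqc0]
    · exact (hqc ρ ⟨h, hρ.2.le⟩).1
  have hmono {ρ ρ' : ℝ} (hρ : 0 ≤ ρ) (hlt : ρ < ρ') (hρ' : ρ' < 1) : qc ρ ≤ qc ρ' := by
    obtain ⟨hr', -, h1⟩ := hqc ρ' ⟨by linarith, hρ'.le⟩
    rcases hρ.eq_or_lt with rfl | h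
    · rw [hqc0]
      exact hr'.1
    · obtain ⟨hr, h0, -⟩ := hqc ρ ⟨h, by linarith⟩
      by_contra! hc
      obtain ⟨q, hq, hq'⟩ := exists_between hc
      have hzero := h0 q (by linarith [hr'.1]) hq'
      have hone := h1 q hq (by linarith [hr.2])
      exact one_ne_zero (hone.symm.trans (measure_mono_null (RhoPerc_anti hlt.le) hzero))
  have hpos {ρ q : ℝ} (hρ : ρ ∈ Set.Ico (0 : ℝ) 1) (hq : qc ρ < q) (hq1 : q ≤ 1) :
      P (1 - q) (RhoPerc ρ) ≠ 0 := by
    rcases hρ.1.eq_or_lt with rfl | h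
    · rw [hqc0] at hq
      have := (hP (1 - q) ⟨by linarith, by linarith⟩).1
      simp [RhoPerc_zero hd]
    · simp [(hqc ρ ⟨h, hρ.2.le⟩).2.2 q hq hq1]
  have hgrowth {ρ ρ' : ℝ} (hρ : 0 ≤ ρ) (hlt : ρ < ρ') (hρ' : ρ' < 1) :
      qc ρ' - qc ρ ≤ (ρ' - ρ) / (1 - ρ) := by
    obtain ⟨hr', h0, -⟩ := hqc ρ' ⟨by linarith, hρ'.le⟩
    have hr := hrange (ρ := ρ) ⟨hρ, by linarith⟩
    set ε := (ρ' - ρ) / (1 - ρ) with hε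
    have h1ρ : 0 < 1 - ρ := by linarith
    have hε0 : 0 ≤ ε := div_nonneg (by linarith) h1ρ.le
    have hε1 : ε ≤ 1 := (div_le_one h1ρ).2 (by linarith)
    have hερ : ρ + ε * (1 - ρ) = ρ' := by
      rw [hε, div_mul_cancel₀ _ h1ρ.ne']
      ring
    by_contra! hc
    obtain ⟨q, hq, hq'⟩ := exists_between (show qc ρ < qc ρ' - ε by linarith)
    have hq1 : q ≤ 1 := by linarith [hr'.2]
    have hq0 : 0 ≤ q := by linarith [hr.1]
    have hε' : 1 - ε ∈ Set.Icc (0 : ℝ) 1 := ⟨by linarith, by linarith⟩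
    have hp : 0 ≤ 1 - q := by linarith
    have hprod : (1 - q) * (1 - ε) = 1 - (q + ε * (1 - q)) := by ring
    have hlt' : q + ε * (1 - q) < qc ρ' := by nlinarith
    have hthin := RhoPerc_ne_zero_of_thinning hp hε' (hP _ ⟨hp, by linarith⟩) (hP _ hε')
      (hP _ ⟨mul_nonneg hp hε'.1, by nlinarith⟩) (hpos ⟨hρ, by linarith⟩ hq hq1)
    rw [_root_.sub_sub_cancel, hερ, hprod] at hthin
    exact hthin (h0 _ (by nlinarith) hlt')
  have hbound {a ρ ρ' : ℝ} (ha : a < 1) (hρ : ρ ∈ Set.Icc 0 a) (hρ' : ρ' ∈ Set.Icc 0 a)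
      (hlt : ρ < ρ') : |qc ρ' - qc ρ| ≤ (1 - a)⁻¹ * |ρ' - ρ| := by
    have h1a : 0 < 1 - a := by linarith
    rw [abs_of_nonneg (sub_nonneg.2 (hmono hρ.1 hlt (by linarith [hρ'.2]))),
      abs_of_pos (sub_pos.2 hlt), mul_comm, ← div_eq_mul_inv]
    refine (hgrowth hρ.1 hlt (by linarith [hρ'.2])).trans ?_
    exact div_le_div_of_nonneg_left (sub_pos.2 hlt).le h1a (by linarith [hρ.2])
  intro ρ hρ
  obtain ⟨a, hρa, ha⟩ := exists_between hρ.2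
  have hlip : LipschitzOnWith (Real.toNNReal (1 - a)⁻¹) qc (Set.Icc 0 a) := by
    refine LipschitzOnWith.of_dist_le_mul fun s hs t ht => ?_
    rw [Real.coe_toNNReal _ (inv_nonneg.2 (by linarith)), Real.dist_eq, Real.dist_eq]
    rcases lt_trichotomy s t with h | rfl | h
    · rw [abs_sub_comm, abs_sub_comm s]
      exact hbound ha hs ht h
    · simp
    · exact hbound ha ht hs h
  refine (hlip.continuousOn ρ ⟨hρ.1, hρa.le⟩).mono_of_mem_nhdsWithin ?_
  rw [mem_nhdsWithin]
  exact ⟨Set.Iio a, isOpen_Iio, hρa, fun t ht => ⟨ht.2.1, le_of_lt ht.1⟩⟩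
end

section
/- Criterion for non-existence of an open Lipschitz surface: fix α ∈ (0,1), d ∈ ℕ and η = (1,…,1) ∈ {−1,0,+1}^d, and define the random variable T := inf{m ∈ ℕ₀ : ∃ x̄ ∈ ℕ₀^d with ‖x̄‖₁ = m such that the site (x̄, ‖x̄‖₁) ∈ ℤ^{d+1} is closed}. If p ∈ (0,1) satisfies E_p[T] < 1/(1−α), then P_p(LIP^{α,d}_η) = 0, i.e. P_p-almost surely there exists no open Lipschitz surface above L^{α,d}_η; consequently 1 − p ≥ q_L(α,d,d). -/
open MeasureTheory Filter ENNReal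

/-- The random variable `T`: the least `m ∈ ℕ₀` such that some site `(x̄, ‖x̄‖₁)` with
`x̄ ∈ ℕ₀^d` and `‖x̄‖₁ = m` is closed (with value `∞` if there is no such site), as an
extended nonnegative real. -/
noncomputable def Tvar {d : ℕ} (ω : Config d) : ℝ≥0∞ :=
  sInf {r : ℝ≥0∞ | ∃ m : ℕ, r = m ∧ ∃ x : Fin d → ℤ, (∀ i, 0 ≤ x i) ∧
    (∑ i, |x i|) = m ∧ ω (Fin.snoc x (m : ℤ)) = false}

/-- The Bernoulli law on `Bool` giving mass `p` to `true`. -/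
noncomputable def boolLaw (p : ℝ) : Measure Bool :=
  ENNReal.ofReal p • Measure.dirac true + ENNReal.ofReal (1 - p) • Measure.dirac false

lemma isProbabilityMeasure_boolLaw {p : ℝ} (hp : p ∈ Set.Icc (0 : ℝ) 1) :
    IsProbabilityMeasure (boolLaw p) := by
  refine ⟨?_⟩
  simp only [boolLaw, Measure.add_apply, Measure.smul_apply, measure_univ, smul_eq_mul, mul_one]
  rw [← ENNReal.ofReal_add hp.1 (sub_nonneg.2 hp.2)]
  simp

lemma boolLaw_singleton (p : ℝ) (b : Bool) :
    boolLaw p {b} = if b then ENNReal.ofReal p else ENNReal.ofReal (1 - p) := by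
  cases b <;> simp [boolLaw]

/-- A measure with the Bernoulli cylinder probabilities is the product measure. -/
lemma IsBernoulli.eq_infinitePi {ι : Type*} {p : ℝ} [IsProbabilityMeasure (boolLaw p)]
    {P : Measure (ι → Bool)} (h : IsBernoulli p P) :
    P = Measure.infinitePi (fun _ => boolLaw p) := by
  classical
  have := h.1
  refine ((Measure.isProjectiveLimit_infinitePi (fun _ : ι => boolLaw p)).unique fun s => ?_).symm
  refine Measure.ext_of_singleton fun f => ?_
  rw [Measure.map_apply (by fun_prop) (MeasurableSet.singleton f), Measure.pi_singleton]
  have hset : s.restrict (π := fun _ => Bool) ⁻¹' {f} =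
      {ω : ι → Bool | ∀ x ∈ s, ω x = if hx : x ∈ s then f ⟨x, hx⟩ else true} := by
    ext ω
    simp only [Set.mem_preimage, Set.mem_singleton_iff, Set.mem_ofPred_eq, funext_iff,
      Finset.restrict, Subtype.forall]
    exact forall₂_congr fun x hx => by simp [hx]
  rw [hset, h.2 s, ← Finset.prod_coe_sort]
  exact Finset.prod_congr rfl fun x _ => by simp [boolLaw_singleton]

/-- A Lipschitz function changes by at most `∑ zᵢ` along a nonnegative displacement `z`. -/
lemma IsLipschitzFn.add_le {d : ℕ} {F : (Fin d → ℤ) → ℤ} (hF : IsLipschitzFn F)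
    (x z : Fin d → ℤ) (hz : ∀ i, 0 ≤ z i) : F (x + z) ≤ F x + ∑ i, z i := by
  obtain ⟨n, hn⟩ : ∃ n : ℕ, ∑ i, z i = n :=
    ⟨(∑ i, z i).toNat, (Int.toNat_of_nonneg (Finset.sum_nonneg fun i _ => hz i)).symm⟩
  induction n generalizing z with
  | zero =>
    have h0 : z = 0 := funext fun i =>
      (Finset.sum_eq_zero_iff_of_nonneg fun i _ => hz i).1 (by simpa using hn) i (Finset.mem_univ i)
    simp [h0]
  | succ n ih =>
    obtain ⟨i, -, hi⟩ : ∃ i ∈ Finset.univ, 0 < z i := by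
      apply Finset.exists_lt_of_sum_lt
      rw [hn]
      simp
    have hsum : ∑ j, (z - Pi.single i 1 : Fin d → ℤ) j = n := by
      simp [Finset.sum_sub_distrib, hn]
    have h1 := ih (z - Pi.single i 1) (fun j => by
      rcases eq_or_ne j i with rfl | hj
      · simp; omega
      · simpa [hj] using hz j) hsum
    have h2 := hF (x + z) (x + (z - Pi.single i 1)) (by
      simp only [Pi.add_apply, Pi.sub_apply]
      simp [Pi.single_apply, apply_ite abs])
    rw [abs_le] at h2
    rw [hsum] at h1
    push_cast at hn
    omega

/-- `ξ` selects, for each configuration `ζ`, a site with nonnegative coordinates, which is a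
closed site with minimal coordinate sum as soon as such a closed site exists. -/
def IsClosedSelector {d : ℕ} (ξ : ((Fin d → ℤ) → Bool) → (Fin d → ℤ)) : Prop :=
  ∀ ζ, (∀ i, 0 ≤ ξ ζ i) ∧ ((∃ x, (∀ i, 0 ≤ x i) ∧ ζ x = false) → ζ (ξ ζ) = false ∧
    ∀ y, (∀ i, 0 ≤ y i) → ζ y = false → ∑ i, ξ ζ i ≤ ∑ i, y i)

/-- There is a measurable choice of a `false` site with nonnegative coordinates and minimal
coordinate sum. -/
lemma exists_measurable_minimal_closed (d : ℕ) :
    ∃ ξ : ((Fin d → ℤ) → Bool) → (Fin d → ℤ), Measurable ξ ∧ IsClosedSelector ξ := by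
  classical
  obtain ⟨e, he⟩ := exists_surjective_nat (Fin d → ℤ)
  let Q : ((Fin d → ℤ) → Bool) → (Fin d → ℤ) → Prop := fun ζ x => (∀ i, 0 ≤ x i) ∧
    ((∃ x, (∀ i, 0 ≤ x i) ∧ ζ x = false) → ζ x = false ∧
      ∀ y, (∀ i, 0 ≤ y i) → ζ y = false → ∑ i, x i ≤ ∑ i, y i)
  have hQ : ∀ ζ, ∃ n, Q ζ (e n) := by
    intro ζ
    suffices ∃ x, Q ζ x by
      obtain ⟨x, hx⟩ := this
      obtain ⟨n, rfl⟩ := he x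
      exact ⟨n, hx⟩
    by_cases hζ : ∃ x : Fin d → ℤ, (∀ i, 0 ≤ x i) ∧ ζ x = false
    · let S : Set (Fin d → ℤ) := {x | (∀ i, 0 ≤ x i) ∧ ζ x = false}
      obtain ⟨x, hxS, hx⟩ :=
        WellFounded.has_min (measure fun x : Fin d → ℤ => (∑ i, x i).toNat).wf S hζ
      refine ⟨x, hxS.1, fun _ => ⟨hxS.2, fun y hy hyc => ?_⟩⟩
      have h1 : ¬ (∑ i, y i).toNat < (∑ i, x i).toNat := hx y ⟨hy, hyc⟩
      have h2 : 0 ≤ ∑ i, y i := Finset.sum_nonneg fun i _ => hy i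
      omega
    · exact ⟨0, fun _ => le_rfl, fun h => (hζ h).elim⟩
  have hclosed : ∀ x : Fin d → ℤ, MeasurableSet {ζ : (Fin d → ℤ) → Bool | ζ x = false} :=
    fun x => measurableSet_eq_fun (measurable_pi_apply x) measurable_const
  have hmeas : ∀ n, MeasurableSet {ζ | Q ζ (e n)} := by
    intro n
    rw [measurableSet_setOfPred]
    refine measurable_const.and (.imp (.exists fun x => measurable_const.and
      (measurableSet_setOfPred.1 (hclosed x))) ((measurableSet_setOfPred.1 (hclosed _)).and
        (.forall fun y => measurable_const.imp
          ((measurableSet_setOfPred.1 (hclosed y)).imp measurable_const))))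
  exact ⟨fun ζ => e (Nat.find (hQ ζ)), (measurable_of_countable e).comp (measurable_find hQ hmeas),
    fun ζ => Nat.find_spec (hQ ζ)⟩

/-- The hyperplane coordinate `z_{d+1} − ∑ zᵢ` of a site. -/
def level {d : ℕ} (z : Site d) : ℤ := z (Fin.last d) - ∑ i : Fin d, z i.castSucc

/-- The site of level `c` above `x`. -/
def levelSite {d : ℕ} (c : ℤ) (x : Fin d → ℤ) : Site d := Fin.snoc x (c + ∑ i, x i)

lemma level_levelSite {d : ℕ} (c : ℤ) (x : Fin d → ℤ) : level (levelSite c x) = c := by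
  simp [level, levelSite]

lemma levelSite_injective {d : ℕ} (c : ℤ) :
    Function.Injective (levelSite c : (Fin d → ℤ) → Site d) := fun _ _ h =>
  (Fin.snoc_inj.1 h).1

/-- The configuration on the hyperplane of level `c`, seen from `x`. -/
def layer {d : ℕ} (c : ℤ) (x : Fin d → ℤ) (ω : Config d) : (Fin d → ℤ) → Bool :=
  fun y => ω (levelSite c (x + y))

lemma map_layer {d : ℕ} (b : Measure Bool) [IsProbabilityMeasure b] (c : ℤ) (x : Fin d → ℤ) :
    (Measure.infinitePi fun _ : Site d => b).map (layer c x) = Measure.infinitePi fun _ => b :=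
  Measure.map_infinitePi_infinitePi_of_inj (P := fun _ : Site d => b)
    ((levelSite_injective c).comp (add_right_injective x))

/-- The σ-algebra generated by the sites whose level lies in `S`. -/
@[reducible] def levelSigma (d : ℕ) (S : Set ℤ) : MeasurableSpace (Config d) :=
  ⨆ z ∈ (level ⁻¹' S : Set (Site d)),
    MeasurableSpace.comap (fun ω : Config d => ω z) inferInstance

lemma levelSigma_le (d : ℕ) (S : Set ℤ) : levelSigma d S ≤ MeasurableSpace.pi :=
  iSup₂_le fun z _ => (measurable_pi_apply z).comap_le

lemma levelSigma_mono (d : ℕ) {S T : Set ℤ} (h : S ⊆ T) : levelSigma d S ≤ levelSigma d T :=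
  biSup_mono fun _ hz => h hz

lemma measurable_layer_levelSigma {d : ℕ} {S : Set ℤ} {c : ℤ} (hc : c ∈ S) (x : Fin d → ℤ) :
    Measurable[levelSigma d S] (layer c x) := by
  refine @measurable_pi_lambda _ _ _ (levelSigma d S) _ _ fun y => ?_
  refine measurable_iff_comap_le.2 (le_iSup₂_of_le (levelSite c (x + y)) ?_ le_rfl)
  simpa [level_levelSite] using hc

lemma measurable_layer {d : ℕ} (c : ℤ) (x : Fin d → ℤ) : Measurable (layer c x) :=
  measurable_pi_lambda _ fun _ => measurable_pi_apply _

lemma indep_levelSigma {d : ℕ} (b : Measure Bool) [IsProbabilityMeasure b] {S T : Set ℤ}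
    (h : Disjoint S T) : ProbabilityTheory.Indep (levelSigma d S) (levelSigma d T)
      (Measure.infinitePi fun _ : Site d => b) :=
  ProbabilityTheory.indep_iSup_of_disjoint (fun z => (measurable_pi_apply z).comap_le)
    (ProbabilityTheory.iIndepFun_infinitePi (P := fun _ : Site d => b) (X := fun _ a => a)
      fun _ => measurable_id).iIndep (h.preimage level)

section Countable

variable {Ω E H : Type*} [Countable E] [MeasurableSpace E] [MeasurableSingletonClass E]
  [MeasurableSpace H]

lemma preimage_comp_eq_iUnion {Ω E H : Type*} (X : Ω → E) (g : E → Ω → H) (B : Set H) :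
    (fun ω => g (X ω) ω) ⁻¹' B = ⋃ e, X ⁻¹' {e} ∩ g e ⁻¹' B := by
  ext ω
  simp

lemma measurable_comp_of_countable {m : MeasurableSpace Ω} {X : Ω → E} (hX : Measurable X)
    {g : E → Ω → H} (hg : ∀ e, Measurable (g e)) : Measurable fun ω => g (X ω) ω := by
  intro B hB
  rw [preimage_comp_eq_iUnion]
  exact .iUnion fun e => (hX (.singleton e)).inter (hg e hB)

/-- If every `g e` has law `μ` and is independent of `m₁`, then so does `g X` for a
countably-valued `m₁`-measurable `X`. -/
lemma measure_inter_preimage_comp {m₁ m₂ mΩ : MeasurableSpace Ω} {ν : Measure Ω}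
    (h : ProbabilityTheory.Indep m₁ m₂ ν) (h₁ : m₁ ≤ mΩ) (h₂ : m₂ ≤ mΩ)
    {X : Ω → E} (hX : Measurable[m₁] X) {g : E → Ω → H} (hg : ∀ e, Measurable[m₂] (g e))
    {μ : Measure H} (hμ : ∀ e, ν.map (g e) = μ) {A : Set Ω} (hA : MeasurableSet[m₁] A)
    {B : Set H} (hB : MeasurableSet B) :
    ν (A ∩ (fun ω => g (X ω) ω) ⁻¹' B) = ν A * μ B := by
  have hXm : ∀ e, MeasurableSet[m₁] (A ∩ X ⁻¹' {e}) := fun e =>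
    @MeasurableSet.inter _ m₁ _ _ hA (hX (.singleton e))
  have hdisj : Pairwise (Function.onFun Disjoint fun e => A ∩ X ⁻¹' {e}) := by
    intro e e' hee'
    refine Set.disjoint_left.2 fun ω hω hω' => hee' ?_
    rw [← hω.2, ← hω'.2]
  have hunion : A = ⋃ e, A ∩ X ⁻¹' {e} := by
    ext ω
    simp
  calc ν (A ∩ (fun ω => g (X ω) ω) ⁻¹' B)
      = ν (⋃ e, (A ∩ X ⁻¹' {e}) ∩ g e ⁻¹' B) := by
        rw [preimage_comp_eq_iUnion, Set.inter_iUnion]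
        simp only [Set.inter_assoc]
    _ = ∑' e, ν ((A ∩ X ⁻¹' {e}) ∩ g e ⁻¹' B) :=
        measure_iUnion (fun e e' hee' => (hdisj hee').mono Set.inter_subset_left
          Set.inter_subset_left) fun e => (h₁ _ (hXm e)).inter (h₂ _ (hg e hB))
    _ = ∑' e, ν (A ∩ X ⁻¹' {e}) * μ B := by
        refine tsum_congr fun e => ?_
        rw [(ProbabilityTheory.Indep_iff _ _ _).1 h _ _ (hXm e) (hg e hB), ← hμ e,
          Measure.map_apply ((hg e).mono h₂ le_rfl) hB]
    _ = ν A * μ B := by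
        rw [ENNReal.tsum_mul_right, ← measure_iUnion hdisj fun e => h₁ _ (hXm e), ← hunion]

end Countable

/-- The exploration walk: at time `k` it jumps, within the hyperplane of level `N - k`, to the
site selected by `ξ`. -/
def walk {d : ℕ} (ξ : ((Fin d → ℤ) → Bool) → (Fin d → ℤ)) (N : ℤ) :
    ℕ → Config d → (Fin d → ℤ)
  | 0, _ => 0
  | k + 1, ω => walk ξ N k ω + ξ (layer (N - k) (walk ξ N k ω) ω)

/-- The `k`-th increment of the exploration walk. -/
def walkStep {d : ℕ} (ξ : ((Fin d → ℤ) → Bool) → (Fin d → ℤ)) (N : ℤ) (k : ℕ) (ω : Config d) :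
    Fin d → ℤ :=
  ξ (layer (N - k) (walk ξ N k ω) ω)

section Walk

variable {d : ℕ} {ξ : ((Fin d → ℤ) → Bool) → (Fin d → ℤ)}

lemma walk_eq_sum (N : ℤ) (k : ℕ) (ω : Config d) :
    walk ξ N k ω = ∑ j ∈ Finset.range k, walkStep ξ N j ω := by
  induction k with
  | zero => rfl
  | succ k ih => rw [Finset.sum_range_succ, ← ih]; rfl

lemma measurable_walkStep_of_walk (hξ : Measurable ξ) {N : ℤ} {k : ℕ} {S : Set ℤ}
    (hk : N - k ∈ S) (hw : Measurable[levelSigma d S] (walk ξ N k)) :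
    Measurable[levelSigma d S] (walkStep ξ N k) :=
  @measurable_comp_of_countable _ _ _ _ _ _ _ (levelSigma d S) _ hw
    (fun x ω => ξ (layer (N - k) x ω)) fun x => hξ.comp (measurable_layer_levelSigma hk x)

lemma measurable_walk_levelSigma (hξ : Measurable ξ) (N : ℤ) (k : ℕ) :
    Measurable[levelSigma d (Set.Ioi (N - k))] (walk ξ N k) := by
  induction k with
  | zero => exact measurable_const
  | succ k ih =>
    have hw : Measurable[levelSigma d (Set.Ioi (N - (k + 1 : ℕ)))] (walk ξ N k) :=
      ih.mono (levelSigma_mono d (Set.Ioi_subset_Ioi (by push_cast; omega))) le_rfl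
    exact hw.add (measurable_walkStep_of_walk hξ (by simp) hw)

lemma measurable_walkStep_levelSigma (hξ : Measurable ξ) (N : ℤ) {j k : ℕ} (hjk : j < k) :
    Measurable[levelSigma d (Set.Ioi (N - k))] (walkStep ξ N j) :=
  measurable_walkStep_of_walk hξ (by simpa using hjk) <| (measurable_walk_levelSigma hξ N j).mono
    (levelSigma_mono d (Set.Ioi_subset_Ioi (by omega))) le_rfl

lemma measurable_walkStep (hξ : Measurable ξ) (N : ℤ) (k : ℕ) : Measurable (walkStep ξ N k) :=
  (measurable_walkStep_levelSigma hξ N k.lt_succ_self).mono (levelSigma_le d _) le_rfl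

variable (b : Measure Bool) [IsProbabilityMeasure b]

lemma measure_inter_preimage_walkStep (hξ : Measurable ξ) (N : ℤ) (k : ℕ) {A : Set (Config d)}
    (hA : MeasurableSet[levelSigma d (Set.Ioi (N - k))] A) {B : Set (Fin d → ℤ)}
    (hB : MeasurableSet B) :
    Measure.infinitePi (fun _ : Site d => b) (A ∩ walkStep ξ N k ⁻¹' B) =
      Measure.infinitePi (fun _ : Site d => b) A *
        (Measure.infinitePi fun _ : Fin d → ℤ => b).map ξ B := by
  have hg : ∀ x, Measurable[levelSigma d {N - (k : ℤ)}] fun ω => ξ (layer (N - k) x ω) :=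
    fun x => hξ.comp (measurable_layer_levelSigma (Set.mem_singleton _) x)
  have hμ : ∀ x, (Measure.infinitePi fun _ : Site d => b).map (fun ω => ξ (layer (N - k) x ω)) =
      (Measure.infinitePi fun _ : Fin d → ℤ => b).map ξ := fun x => by
    rw [← map_layer b (N - k) x, Measure.map_map hξ (measurable_layer _ _), Function.comp_def]
  have hind := indep_levelSigma (d := d) b (S := Set.Ioi (N - (k : ℤ))) (T := {N - (k : ℤ)})
    (by simp)
  exact measure_inter_preimage_comp hind (levelSigma_le d _) (levelSigma_le d _)
    (measurable_walk_levelSigma hξ N k) hg hμ hA hB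

lemma map_walkStep (hξ : Measurable ξ) (N : ℤ) (k : ℕ) :
    (Measure.infinitePi fun _ : Site d => b).map (walkStep ξ N k) =
      (Measure.infinitePi fun _ => b).map ξ := by
  ext B hB
  have h := measure_inter_preimage_walkStep b hξ N k
    (@MeasurableSet.univ _ (levelSigma d (Set.Ioi (N - k)))) hB
  rwa [Set.univ_inter, measure_univ, one_mul,
    ← Measure.map_apply (measurable_walkStep hξ N k) hB] at h

lemma indepFun_walkStep (hξ : Measurable ξ) (N : ℤ) {j k : ℕ} (hjk : j < k) :
    ProbabilityTheory.IndepFun (walkStep ξ N j) (walkStep ξ N k)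
      (Measure.infinitePi fun _ : Site d => b) := by
  rw [ProbabilityTheory.indepFun_iff_measure_inter_preimage_eq_mul]
  intro A B hA hB
  rw [measure_inter_preimage_walkStep b hξ N k (measurable_walkStep_levelSigma hξ N hjk hA) hB,
    ← map_walkStep b hξ N k, Measure.map_apply (measurable_walkStep hξ N k) hB]

/-- Strong law of large numbers for the coordinate sum of the exploration walk. -/
lemma tendsto_sum_walk_div (hξ : Measurable ξ) (N : ℤ)
    (hint : Integrable (fun ζ => ((∑ i, ξ ζ i : ℤ) : ℝ)) (Measure.infinitePi fun _ => b)) :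
    ∀ᵐ ω ∂(Measure.infinitePi fun _ : Site d => b),
      Tendsto (fun k : ℕ => ((∑ i, walk ξ N k ω i : ℤ) : ℝ) / k) atTop
        (nhds (∫ ζ, ((∑ i, ξ ζ i : ℤ) : ℝ) ∂(Measure.infinitePi fun _ => b))) := by
  let φ : (Fin d → ℤ) → ℝ := fun x => ((∑ i, x i : ℤ) : ℝ)
  have hφ : Measurable φ := measurable_of_countable φ
  have hid : ∀ k, ProbabilityTheory.IdentDistrib (fun ω => φ (walkStep ξ N k ω))
      (fun ζ => φ (ξ ζ)) (Measure.infinitePi fun _ : Site d => b)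
      (Measure.infinitePi fun _ => b) := fun k =>
    (⟨(measurable_walkStep hξ N k).aemeasurable, hξ.aemeasurable, map_walkStep b hξ N k⟩ :
      ProbabilityTheory.IdentDistrib (walkStep ξ N k) ξ _ _).comp hφ
  have hlaw := ProbabilityTheory.strong_law_ae_real (fun k ω => φ (walkStep ξ N k ω))
    ((hid 0).integrable_iff.2 hint) (fun j k hjk => by
      rcases hjk.lt_or_gt with h | h
      · exact (indepFun_walkStep b hξ N h).comp hφ hφ
      · exact ((indepFun_walkStep b hξ N h).comp hφ hφ).symm)
    (fun k => (hid k).trans (hid 0).symm)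
  rw [(hid 0).integral_eq] at hlaw
  filter_upwards [hlaw] with ω hω
  refine hω.congr fun k => ?_
  rw [walk_eq_sum]
  simp only [φ, Finset.sum_apply]
  rw [Finset.sum_comm]
  push_cast
  rfl

end Walk

/-- If the exploration walk gets below the tilted plane, then an open Lipschitz surface above the
plane has height more than `N` at the origin. -/
lemma lt_of_walk_below {d : ℕ} {ξ : ((Fin d → ℤ) → Bool) → (Fin d → ℤ)} (hsel : IsClosedSelector ξ)
    {α : ℝ} {ω : Config d} {F : (Fin d → ℤ) → ℤ} (hF : IsLipschitzFn F)
    (hopen : ∀ x, ω (Fin.snoc x (F x)) = true ∧ planeHt α (fun _ => 1) x < F x)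
    (hclosed : ∀ (c : ℤ) (x : Fin d → ℤ), ∃ y, (∀ i, 0 ≤ y i) ∧ layer c x ω y = false)
    {N : ℤ} {k : ℕ} (hk : (N : ℝ) - k + (1 - α) * (∑ i, walk ξ N k ω i : ℤ) ≤ 0) :
    N < F 0 := by
  have hmain : ∀ j ≤ k, N - j + ∑ i, walk ξ N j ω i < F (walk ξ N j ω) := by
    intro j hj
    induction hj using Nat.decreasingInduction with
    | self =>
      refine lt_of_le_of_lt ?_ (hopen _).2
      rw [planeHt, Int.le_floor]
      push_cast at hk ⊢
      simp only [one_mul]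
      linarith
    | of_succ j hj ih =>
      set x := walk ξ N j ω
      have hx : walk ξ N (j + 1) ω = x + ξ (layer (N - j) x ω) := rfl
      rw [hx] at ih
      obtain ⟨hpos, hmin⟩ := hsel (layer (N - j) x ω)
      have hcl := (hmin (hclosed _ _)).1
      have hne : F (x + ξ (layer (N - j) x ω)) ≠
          N - j + ∑ i, (x + ξ (layer (N - j) x ω)) i := by
        intro h
        have h1 := (hopen (x + ξ (layer (N - j) x ω))).1
        rw [h] at h1
        exact Bool.false_ne_true (hcl.symm.trans h1)
      have hlip := hF.add_le x _ hpos
      simp only [Pi.add_apply, Finset.sum_add_distrib] at ih hne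
      push_cast at ih
      omega
  simpa [walk] using hmain 0 k.zero_le

/-- The minimal closed site in the layer of level zero realizes `Tvar`. -/
lemma ofReal_sum_selector_le_Tvar {d : ℕ} {ξ : ((Fin d → ℤ) → Bool) → (Fin d → ℤ)}
    (hsel : IsClosedSelector ξ) (ω : Config d) :
    ENNReal.ofReal ((∑ i, ξ (layer 0 0 ω) i : ℤ) : ℝ) ≤ Tvar ω := by
  refine le_sInf ?_
  rintro _ ⟨m, rfl, x, hx, hm, hc⟩
  have hsum : ∑ i, x i = m := by
    rw [← hm]
    exact Finset.sum_congr rfl fun i _ => (abs_of_nonneg (hx i)).symm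
  have hlayer : layer 0 0 ω x = false := by simpa [layer, levelSite, hsum] using hc
  have hle := ((hsel (layer 0 0 ω)).2 ⟨x, hx, hlayer⟩).2 x hx hlayer
  rw [hsum] at hle
  rw [← ENNReal.ofReal_natCast]
  exact ENNReal.ofReal_le_ofReal (by exact_mod_cast hle)

lemma Tvar_eq_top {d : ℕ} {ω : Config d} (h : ¬ ∃ y, (∀ i, 0 ≤ y i) ∧ layer 0 0 ω y = false) :
    Tvar ω = ⊤ := by
  rw [Tvar, sInf_eq_top]
  rintro _ ⟨m, rfl, x, hx, hm, hc⟩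
  refine (h ⟨x, hx, ?_⟩).elim
  have hsum : ∑ i, x i = m := by
    rw [← hm]
    exact Finset.sum_congr rfl fun i _ => (abs_of_nonneg (hx i)).symm
  simpa [layer, levelSite, hsum] using hc

lemma measurableSet_exists_closed (d : ℕ) :
    MeasurableSet {ζ : (Fin d → ℤ) → Bool | ∃ y, (∀ i, 0 ≤ y i) ∧ ζ y = false} := by
  rw [measurableSet_setOfPred]
  exact .exists fun y => measurable_const.and (measurableSet_setOfPred.1
    (measurableSet_eq_fun (measurable_pi_apply y) measurable_const))

/-- If `Tvar` has finite mean, almost surely every orthant of every layer has a closed site. -/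
lemma ae_exists_closed {d : ℕ} (b : Measure Bool) [IsProbabilityMeasure b]
    (hT : ∫⁻ ω, Tvar ω ∂(Measure.infinitePi fun _ : Site d => b) ≠ ⊤) :
    ∀ᵐ ω ∂(Measure.infinitePi fun _ : Site d => b), ∀ (c : ℤ) (x : Fin d → ℤ),
      ∃ y, (∀ i, 0 ≤ y i) ∧ layer c x ω y = false := by
  have hG := measurableSet_exists_closed d
  have hbase : ∀ᵐ ω ∂(Measure.infinitePi fun _ : Site d => b),
      ∃ y, (∀ i, 0 ≤ y i) ∧ layer 0 0 ω y = false := by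
    have hS := (measurable_layer (d := d) 0 0) hG.compl
    by_contra hne
    refine hT (top_unique ?_)
    calc (⊤ : ℝ≥0∞) = ∫⁻ _ in layer 0 0 ⁻¹' {ζ | ∃ y, (∀ i, 0 ≤ y i) ∧ ζ y = false}ᶜ, ⊤
          ∂(Measure.infinitePi fun _ : Site d => b) := by
          rw [setLIntegral_const]
          exact (ENNReal.top_mul hne).symm
      _ ≤ ∫⁻ ω in layer 0 0 ⁻¹' {ζ | ∃ y, (∀ i, 0 ≤ y i) ∧ ζ y = false}ᶜ, Tvar ω
          ∂(Measure.infinitePi fun _ : Site d => b) :=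
          setLIntegral_mono' hS fun ω hω => (Tvar_eq_top hω).ge
      _ ≤ _ := setLIntegral_le_lintegral _ _
  have hlaw : ∀ᵐ ζ ∂(Measure.infinitePi fun _ : Fin d → ℤ => b),
      ∃ y, (∀ i, 0 ≤ y i) ∧ ζ y = false := by
    rw [← map_layer b 0 0]
    exact (ae_map_iff (measurable_layer 0 0).aemeasurable hG).2 hbase
  simp only [ae_all_iff]
  intro c x
  rw [← map_layer b c x] at hlaw
  exact (ae_map_iff (measurable_layer c x).aemeasurable hG).1 hlaw

/-- Under the drift condition there is almost surely no open Lipschitz surface. -/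
lemma measure_LIP_eq_zero {d : ℕ} (b : Measure Bool) [IsProbabilityMeasure b] {α : ℝ} (hα : α < 1)
    (hT : ∫⁻ ω, Tvar ω ∂(Measure.infinitePi fun _ : Site d => b) < ENNReal.ofReal (1 / (1 - α))) :
    Measure.infinitePi (fun _ : Site d => b) (LIP α fun _ => 1) = 0 := by
  obtain ⟨ξ, hξ, hsel⟩ := exists_measurable_minimal_closed d
  have hφ : Measurable fun ζ => ((∑ i, ξ ζ i : ℤ) : ℝ) :=
    (measurable_of_countable fun x : Fin d → ℤ => ((∑ i, x i : ℤ) : ℝ)).comp hξ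
  have hnonneg : ∀ ζ, 0 ≤ ((∑ i, ξ ζ i : ℤ) : ℝ) := fun ζ => by
    exact_mod_cast Finset.sum_nonneg fun i _ => (hsel ζ).1 i
  have hlint : ∫⁻ ζ, ENNReal.ofReal ((∑ i, ξ ζ i : ℤ) : ℝ) ∂(Measure.infinitePi fun _ => b) <
      ENNReal.ofReal (1 / (1 - α)) := by
    rw [← map_layer b 0 0, lintegral_map hφ.ennreal_ofReal (measurable_layer 0 0)]
    exact (lintegral_mono fun ω => ofReal_sum_selector_le_Tvar hsel ω).trans_lt hT
  have hint : Integrable (fun ζ => ((∑ i, ξ ζ i : ℤ) : ℝ)) (Measure.infinitePi fun _ => b) :=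
    ⟨hφ.aestronglyMeasurable, (hasFiniteIntegral_iff_ofReal (ae_of_all _ hnonneg)).2
      (hlint.trans ENNReal.ofReal_lt_top)⟩
  have hmean : ∫ ζ, ((∑ i, ξ ζ i : ℤ) : ℝ) ∂(Measure.infinitePi fun _ => b) < 1 / (1 - α) := by
    rw [integral_eq_lintegral_of_nonneg_ae (ae_of_all _ hnonneg) hφ.aestronglyMeasurable]
    exact (ENNReal.lt_ofReal_iff_toReal_lt (hlint.trans ENNReal.ofReal_lt_top).ne).1 hlint
  obtain ⟨r, hr, hr'⟩ := exists_between hmean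
  have hα' : 0 < 1 - α := sub_pos.2 hα
  have hδ : 0 < 1 - (1 - α) * r := by
    rw [lt_div_iff₀ hα'] at hr'
    linarith
  have hlaw := ae_all_iff.2 fun N : ℤ => tendsto_sum_walk_div b hξ N hint
  have hne : ∀ᵐ ω ∂(Measure.infinitePi fun _ : Site d => b), ω ∉ LIP α fun _ => 1 := by
    filter_upwards [hlaw, ae_exists_closed b (hT.trans ENNReal.ofReal_lt_top).ne]
      with ω hlim hclosed
    rintro ⟨F, hF, hopen⟩
    have hfar := (tendsto_natCast_atTop_atTop (R := ℝ)).eventually_ge_atTop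
      (F 0 / (1 - (1 - α) * r))
    obtain ⟨k, hk, hkpos, hkfar⟩ := (((hlim (F 0)).eventually_lt_const hr).and
      ((eventually_gt_atTop 0).and hfar)).exists
    refine lt_irrefl _ (lt_of_walk_below hsel hF hopen hclosed (N := F 0) (k := k) ?_)
    rw [div_lt_iff₀ (by exact_mod_cast hkpos)] at hk
    rw [div_le_iff₀ hδ] at hkfar
    linarith [mul_lt_mul_of_pos_left hk hα']
  simpa [ae_iff] using hne

/-- Criterion for the non-existence of an open Lipschitz surface:
for `α ∈ (0,1)`, `η = (1,…,1)` and `p ∈ (0,1)`, if `E_p[T] < 1/(1−α)` then `P_p`-a.s.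
there is no open Lipschitz surface above `L^{α,d}_η`; consequently
`1 − p ≥ q_L(α,d,d)`. -/
theorem criterion_nonexistence_open_lipschitz_surface
    {d : ℕ} (hd : 1 ≤ d) (α : ℝ) (hα : α ∈ Set.Ioo (0 : ℝ) 1)
    (p : ℝ) (hp : p ∈ Set.Ioo (0 : ℝ) 1)
    (P : ℝ → Measure (Config d)) (hP : ∀ p' ∈ Set.Icc (0 : ℝ) 1, IsBernoulli p' (P p'))
    (hT : ∫⁻ ω, Tvar ω ∂(P p) < ENNReal.ofReal (1 / (1 - α))) :
    P p (LIP α (fun _ => 1)) = 0 ∧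
    ∀ pc : ℝ, IsCriticalProb P α (fun _ => 1) pc → 1 - pc ≤ 1 - p := by
  have := isProbabilityMeasure_boolLaw ⟨hp.1.le, hp.2.le⟩
  have hLIP : P p (LIP α (fun _ => 1)) = 0 := by
    rw [(hP p ⟨hp.1.le, hp.2.le⟩).eq_infinitePi] at hT ⊢
    exact measure_LIP_eq_zero (boolLaw p) hα.2 hT
  refine ⟨hLIP, fun pc hpc => sub_le_sub_left (not_lt.1 fun hlt => ?_) 1⟩
  exact zero_ne_one (hLIP.symm.trans (hpc.2.2 p hlt hp.2.le))
end

section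
/- For every d ∈ ℕ and every q ∈ (0,1), under P_{1−q} the normalized maximal number of closed sites on oriented paths, Y_{0,n}/n, converges almost surely and in L¹ to a deterministic constant γ(q), and this limit equals the critical density of ρ-percolation: γ(q) = ρ_c(q). -/
open MeasureTheory Filter ENNReal

/-- `Y_{0,n}`: the maximal number of closed sites collected by an oriented
nearest-neighbour path of length `n` started at the origin. -/
noncomputable def Ymax (d n : ℕ) (ω : ConfigD d) : ℕ :=
  sSup {r : ℕ | ∃ x : ℕ → Fin d → ℤ, IsOrientedPath x ∧
    r = ∑ i ∈ Finset.Icc 1 n, if ω (x i) then 0 else 1}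

/-- `ρ_c(q) = sup {ρ | P_{1−q}(ρ-percolation occurs) = 1}`, where `P p` is the
Bernoulli(`p`) product measure on `{0,1}^{ℤ^d}`. -/
noncomputable def rhoC {d : ℕ} (P : ℝ → Measure (ConfigD d)) (q : ℝ) : ℝ :=
  sSup {ρ : ℝ | P (1 - q) (RhoPerc ρ) = 1}

section Bernoulli

variable {ι : Type*} {p : ℝ} {P P' : Measure (ι → Bool)}

lemma IsBernoulli.ext (hP : IsBernoulli p P) (hP' : IsBernoulli p P') : P = P' := by
  have := hP.1
  have := hP'.1
  classical
  refine IsProjectiveLimit.unique (P := fun I : Finset ι => P'.map I.restrict) (fun I => ?_)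
    (fun I => rfl)
  refine Measure.ext_of_singleton fun g => ?_
  have hpre : (I.restrict : (ι → Bool) → (I → Bool)) ⁻¹' {g} =
      {ω | ∀ x ∈ I, ω x = if h : x ∈ I then g ⟨x, h⟩ else true} := by
    ext ω
    simp only [Set.mem_preimage, Set.mem_singleton_iff, Set.mem_ofPred_eq, funext_iff]
    constructor
    · intro h x hx
      simpa [hx] using h ⟨x, hx⟩
    · rintro h ⟨x, hx⟩
      simpa [hx] using h x hx
  rw [Measure.map_apply (by fun_prop) (measurableSet_singleton g),
    Measure.map_apply (by fun_prop) (measurableSet_singleton g), hpre, hP.2, hP'.2]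

open Classical in
/-- The configuration equal to the second component on `A` and to the first one off `A`. -/
noncomputable def splice (A : Set ι) (w : (ι → Bool) × (ι → Bool)) : ι → Bool :=
  fun x => if x ∈ A then w.2 x else w.1 x

lemma measurable_splice (A : Set ι) : Measurable (splice A) := by
  refine measurable_pi_lambda _ fun x => ?_
  by_cases hx : x ∈ A <;> simp only [splice, hx, if_true, if_false] <;> fun_prop

lemma splice_of_mem {A : Set ι} {x : ι} (hx : x ∈ A) (w : (ι → Bool) × (ι → Bool)) :
    splice A w x = w.2 x := by
  simp [splice, hx]

lemma splice_of_notMem {A : Set ι} {x : ι} (hx : x ∉ A) (w : (ι → Bool) × (ι → Bool)) :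
    splice A w x = w.1 x := by
  simp [splice, hx]

lemma measurableSet_cylinder (s : Finset ι) (f : ι → Bool) :
    MeasurableSet {ω : ι → Bool | ∀ x ∈ s, ω x = f x} := by
  have : {ω : ι → Bool | ∀ x ∈ s, ω x = f x} = ⋂ x ∈ s, (fun ω => ω x) ⁻¹' {f x} := by
    ext; simp
  rw [this]
  exact s.measurableSet_biInter fun x _ => measurable_pi_apply x (measurableSet_singleton _)

lemma IsBernoulli.map_splice (hP : IsBernoulli p P) (A : Set ι) :
    (P.prod P).map (splice A) = P := by
  classical
  have := hP.1
  refine IsBernoulli.ext (p := p) ⟨Measure.isProbabilityMeasure_map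
    (measurable_splice A).aemeasurable, fun s f => ?_⟩ hP
  rw [Measure.map_apply (measurable_splice A) (measurableSet_cylinder s f)]
  have hpre : splice A ⁻¹' {ω | ∀ x ∈ s, ω x = f x} =
      {ω | ∀ x ∈ s.filter (· ∉ A), ω x = f x} ×ˢ {ω | ∀ x ∈ s.filter (· ∈ A), ω x = f x} := by
    ext w
    simp only [Set.mem_preimage, Set.mem_ofPred_eq, Set.mem_prod, Finset.mem_filter]
    constructor
    · intro h
      exact ⟨fun x hx => by rw [← h x hx.1, splice_of_notMem hx.2],
        fun x hx => by rw [← h x hx.1, splice_of_mem hx.2]⟩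
    · rintro ⟨h₁, h₂⟩ x hx
      by_cases hA : x ∈ A
      · rw [splice_of_mem hA, h₂ x ⟨hx, hA⟩]
      · rw [splice_of_notMem hA, h₁ x ⟨hx, hA⟩]
  rw [hpre, Measure.prod_prod, hP.2, hP.2, mul_comm, Finset.prod_filter_mul_prod_filter_not]

lemma IsBernoulli.map_comp_equiv (hP : IsBernoulli p P) (e : ι ≃ ι) :
    P.map (fun ω x => ω (e x)) = P := by
  have := hP.1
  have hm : Measurable fun (ω : ι → Bool) x => ω (e x) := by fun_prop
  refine IsBernoulli.ext (p := p) ⟨Measure.isProbabilityMeasure_map hm.aemeasurable,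
    fun s f => ?_⟩ hP
  rw [Measure.map_apply hm (measurableSet_cylinder s f)]
  have hpre : (fun (ω : ι → Bool) x => ω (e x)) ⁻¹' {ω | ∀ x ∈ s, ω x = f x} =
      {ω | ∀ x ∈ s.map e.toEmbedding, ω x = f (e.symm x)} := by
    ext ω
    simp only [Set.mem_preimage, Set.mem_ofPred_eq, Finset.forall_mem_map,
      Equiv.coe_toEmbedding, Equiv.symm_apply_apply]
  rw [hpre, hP.2, Finset.prod_map]
  simp

lemma IsBernoulli.measure_inter (hP : IsBernoulli p P) {S : Set ι} {A B : Set (ι → Bool)}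
    (hA : MeasurableSet A) (hB : MeasurableSet B)
    (hAS : DependsOn (fun ω => ω ∈ A) S) (hBS : DependsOn (fun ω => ω ∈ B) Sᶜ) :
    P (A ∩ B) = P A * P B := by
  have := hP.1
  have hpre : splice Sᶜ ⁻¹' (A ∩ B) = A ×ˢ B := by
    ext w
    have h₁ : (splice Sᶜ w ∈ A) = (w.1 ∈ A) := hAS fun x hx => splice_of_notMem (by simpa) w
    have h₂ : (splice Sᶜ w ∈ B) = (w.2 ∈ B) := hBS fun x hx => splice_of_mem hx w
    simp [h₁, h₂]
  nth_rewrite 1 [← hP.map_splice Sᶜ]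
  rw [Measure.map_apply (measurable_splice _) (hA.inter hB), hpre, Measure.prod_prod]

lemma integrable_of_abs_le {Ω : Type*} [MeasurableSpace Ω] {μ : Measure Ω} [IsFiniteMeasure μ]
    {f : Ω → ℝ} {C : ℝ} (hf : Measurable f) (hC : ∀ ω, |f ω| ≤ C) : Integrable f μ :=
  Integrable.of_bound hf.aestronglyMeasurable C (ae_of_all _ hC)

lemma IsBernoulli.integral_mul_eq (hP : IsBernoulli p P) (A : Set ι) {f h : (ι → Bool) → ℝ}
    {C D : ℝ} (hf : Measurable f) (hh : Measurable h) (hfC : ∀ ω, |f ω| ≤ C)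
    (hhD : ∀ ω, |h ω| ≤ D) (hhA : ∀ w, h (splice A w) = h w.1) :
    ∫ ω, f ω * h ω ∂P = ∫ ω, (∫ ω', f (splice A (ω, ω')) ∂P) * h ω ∂P := by
  have := hP.1
  nth_rewrite 1 [← hP.map_splice A]
  rw [integral_map (measurable_splice A).aemeasurable (by fun_prop), integral_prod]
  · simp only [hhA, integral_mul_const]
  · refine integrable_of_abs_le (C := C * D)
      ((hf.mul hh).comp (measurable_splice A)) fun w => ?_
    rw [abs_mul]
    exact mul_le_mul (hfC _) (hhD _) (abs_nonneg _) ((abs_nonneg _).trans (hfC (splice A w)))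

/-- A function of independent blocks which changes by at most one when a single block is modified
has variance at most the number of blocks. -/
lemma IsBernoulli.integral_sq_sub_le {κ : Type*} (hP : IsBernoulli p P) (lev : ι → κ)
    (S : Finset κ) :
    ∀ (f : (ι → Bool) → ℝ) (C : ℝ), Measurable f → (∀ ω, |f ω| ≤ C) →
      DependsOn f {x | lev x ∈ S} →
      (∀ k ∈ S, ∀ ω ω', (∀ x, lev x ≠ k → ω x = ω' x) → |f ω - f ω'| ≤ 1) →
      ∫ ω, (f ω - ∫ ω', f ω' ∂P) ^ 2 ∂P ≤ S.card := by
  classical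
  have := hP.1
  induction S using Finset.induction_on with
  | empty =>
    intro f C hf hC hdep _
    have hconst : ∀ ω, f ω = f (fun _ => true) := fun ω => hdep (by simp)
    simp [hconst]
  | insert k S hk ih =>
    intro f C hf hC hdep hdiff
    set A : Set ι := {x | lev x = k}
    set g : (ι → Bool) → ℝ := fun ω => ∫ ω', f (splice A (ω, ω')) ∂P with hg_def
    set c := ∫ ω, f ω ∂P
    have hfs : Measurable fun w => f (splice A w) := hf.comp (measurable_splice A)
    have hint : ∀ ω, Integrable (fun ω' => f (splice A (ω, ω'))) P := fun ω =>
      integrable_of_abs_le (hfs.comp measurable_prodMk_left) fun _ => hC _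
    have hg : Measurable g :=
      (hfs.stronglyMeasurable.integral_prod_right (ν := P)).measurable
    have hgC : ∀ ω, |g ω| ≤ C := fun ω => by
      have := norm_integral_le_of_norm_le_const (μ := P) (C := C)
        (f := fun ω' => f (splice A (ω, ω'))) (ae_of_all _ fun ω' => hC (splice A (ω, ω')))
      simpa using this
    have hgA : ∀ w, g (splice A w) = g w.1 := fun w => by
      simp only [hg_def]
      refine integral_congr_ae (ae_of_all _ fun ω' => congrArg f ?_)
      funext x
      by_cases hx : x ∈ A
      · simp [splice_of_mem hx]
      · simp [splice_of_notMem hx]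
    have hgc : ∫ ω, g ω ∂P = c := by
      have := hP.integral_mul_eq A hf (h := fun _ => 1) (D := 1) measurable_const hC (by simp)
        (by simp)
      simpa using this.symm
    have hfg : ∀ ω, |f ω - g ω| ≤ 1 := fun ω => by
      have heq : f ω - g ω = ∫ ω', (f ω - f (splice A (ω, ω'))) ∂P := by
        rw [integral_sub (integrable_const _) (hint ω)]
        simp [g]
      rw [heq]
      have := norm_integral_le_of_norm_le_const (μ := P) (C := 1)
        (f := fun ω' => f ω - f (splice A (ω, ω')))
        (ae_of_all _ fun ω' => hdiff k (Finset.mem_insert_self _ _) _ _ fun x hx =>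
          (splice_of_notMem (A := A) (w := (ω, ω')) hx).symm)
      simpa using this
    have hg_dep : DependsOn g {x | lev x ∈ S} := fun ω₁ ω₂ h => by
      refine integral_congr_ae (ae_of_all _ fun ω' => hdep fun x hx => ?_)
      by_cases hxA : x ∈ A
      · simp [splice_of_mem hxA]
      · rw [splice_of_notMem hxA, splice_of_notMem hxA]
        exact h x ((Finset.mem_insert.1 hx).resolve_left hxA)
    have hg_diff : ∀ j ∈ S, ∀ ω ω', (∀ x, lev x ≠ j → ω x = ω' x) → |g ω - g ω'| ≤ 1 := by
      intro j hj ω₁ ω₂ h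
      rw [← integral_sub (hint _) (hint _)]
      have := norm_integral_le_of_norm_le_const (μ := P) (C := 1)
        (f := fun ω' => f (splice A (ω₁, ω')) - f (splice A (ω₂, ω')))
        (ae_of_all _ fun ω' => hdiff j (Finset.mem_insert_of_mem hj) _ _ fun x hx => by
          by_cases hxA : x ∈ A
          · simp [splice_of_mem hxA]
          · rw [splice_of_notMem hxA, splice_of_notMem hxA]
            exact h x hx)
      simpa using this
    have hih := ih g C hg hgC hg_dep hg_diff
    rw [hgc] at hih
    have hcC : ∀ ω, |g ω - c| ≤ C + |c| := fun ω =>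
      (abs_sub _ _).trans (add_le_add (hgC ω) le_rfl)
    have hi₁ : Integrable (fun ω => (f ω - g ω) ^ 2) P :=
      integrable_of_abs_le (C := 1) (by fun_prop) fun ω => by
        rw [abs_pow]; exact pow_le_one₀ (abs_nonneg _) (hfg ω)
    have hprod : ∀ u : (ι → Bool) → ℝ, Measurable u → (∀ ω, |u ω| ≤ C) →
        Integrable (fun ω => u ω * (g ω - c)) P := fun u hu huC =>
      integrable_of_abs_le (C := C * (C + |c|)) (by fun_prop) fun ω => by
        rw [abs_mul]
        exact mul_le_mul (huC ω) (hcC ω) (abs_nonneg _) ((abs_nonneg _).trans (huC ω))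
    have hi₂ : Integrable (fun ω => (g ω - c) ^ 2) P :=
      integrable_of_abs_le (C := (C + |c|) ^ 2) (by fun_prop) fun ω => by
        rw [abs_pow]; exact pow_le_pow_left₀ (abs_nonneg _) (hcC ω) 2
    have horth : ∫ ω, f ω * (g ω - c) ∂P = ∫ ω, g ω * (g ω - c) ∂P :=
      hP.integral_mul_eq A hf (by fun_prop) hC hcC fun w => by rw [hgA]
    have hexp : ∀ ω, (f ω - c) ^ 2 =
        (f ω - g ω) ^ 2 + 2 * (f ω * (g ω - c) - g ω * (g ω - c)) + (g ω - c) ^ 2 :=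
      fun ω => by ring
    simp only [hexp]
    have hcross : Integrable (fun ω => f ω * (g ω - c) - g ω * (g ω - c)) P :=
      (hprod f hf hC).sub (hprod g hg hgC)
    rw [integral_add (by exact hi₁.add (hcross.const_mul 2)) hi₂,
      integral_add hi₁ (hcross.const_mul 2), integral_const_mul, integral_sub (hprod f hf hC) (hprod g hg hgC), horth,
      Finset.card_insert_of_notMem hk]
    have hle : ∫ ω, (f ω - g ω) ^ 2 ∂P ≤ 1 := by
      have := integral_mono (μ := P) hi₁ (integrable_const 1) fun ω => by
        rw [← sq_abs]; exact pow_le_one₀ (abs_nonneg _) (hfg ω)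
      simpa using this
    push_cast
    linarith

end Bernoulli

section Paths

variable {d : ℕ}

/-- The position after `n` steps of the oriented path with step directions `s`. -/
def pathPos (s : ℕ → Fin d) (n : ℕ) : Fin d → ℤ :=
  ∑ i ∈ Finset.range n, Pi.single (s i) 1

/-- The number of closed sites among the first `n` sites after the origin. -/
def closedCount (ω : ConfigD d) (s : ℕ → Fin d) (n : ℕ) : ℕ :=
  ∑ i ∈ Finset.range n, if ω (pathPos s (i + 1)) then 0 else 1

/-- The sum of the coordinates of a site. -/
def siteLevel (x : Fin d → ℤ) : ℤ := ∑ i, x i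

lemma siteLevel_pathPos (s : ℕ → Fin d) (n : ℕ) : siteLevel (pathPos s n) = n := by
  simp only [siteLevel, pathPos, Finset.sum_apply]
  rw [Finset.sum_comm]
  simp

lemma siteLevel_add (x y : Fin d → ℤ) : siteLevel (x + y) = siteLevel x + siteLevel y := by
  simp [siteLevel, Finset.sum_add_distrib]

lemma isOrientedPath_pathPos (s : ℕ → Fin d) : IsOrientedPath (pathPos s) :=
  ⟨by simp [pathPos], fun n => ⟨s n, by simp [pathPos, Finset.sum_range_succ]⟩⟩

lemma IsOrientedPath.exists_eq_pathPos {x : ℕ → Fin d → ℤ} (hx : IsOrientedPath x) :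
    ∃ s : ℕ → Fin d, x = pathPos s := by
  choose s hs using hx.2
  refine ⟨s, funext fun n => ?_⟩
  induction n with
  | zero => simp [pathPos, hx.1]
  | succ n ih => rw [hs, ih, pathPos, pathPos, Finset.sum_range_succ]

lemma pathPos_add (s : ℕ → Fin d) (m n : ℕ) :
    pathPos s (m + n) = pathPos (fun i => s (m + i)) n + pathPos s m := by
  simp only [pathPos, Finset.sum_range_add]
  rw [add_comm]

lemma pathPos_congr {s t : ℕ → Fin d} {n : ℕ} (h : ∀ i < n, s i = t i) :
    pathPos s n = pathPos t n :=
  Finset.sum_congr rfl fun i hi => by rw [h i (Finset.mem_range.1 hi)]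

lemma closedCount_congr (ω : ConfigD d) {s t : ℕ → Fin d} {n : ℕ} (h : ∀ i < n, s i = t i) :
    closedCount ω s n = closedCount ω t n :=
  Finset.sum_congr rfl fun i hi => by
    rw [pathPos_congr fun j hj => h j (by have := Finset.mem_range.1 hi; omega)]

lemma closedCount_eq_sum_Icc (ω : ConfigD d) (s : ℕ → Fin d) (n : ℕ) :
    closedCount ω s n = ∑ i ∈ Finset.Icc 1 n, if ω (pathPos s i) then 0 else 1 := by
  rw [closedCount, Finset.range_eq_Ico,
    Finset.sum_Ico_add' (fun i => if ω (pathPos s i) then 0 else 1) 0 n 1]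
  rfl

lemma cast_closedCount (ω : ConfigD d) (s : ℕ → Fin d) (n : ℕ) :
    (closedCount ω s n : ℝ) =
      ∑ i ∈ Finset.Icc 1 n, if ω (pathPos s i) then (0 : ℝ) else 1 := by
  rw [closedCount_eq_sum_Icc]
  push_cast
  rfl

/-- The configuration seen from the site `z`. -/
def seenFrom (z : Fin d → ℤ) (ω : ConfigD d) : ConfigD d := fun x => ω (x + z)

lemma measurable_seenFrom (z : Fin d → ℤ) : Measurable (seenFrom z) := by
  unfold seenFrom; fun_prop

lemma IsBernoulli.map_seenFrom {p : ℝ} {P : Measure (ConfigD d)} (hP : IsBernoulli p P)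
    (z : Fin d → ℤ) : P.map (seenFrom z) = P :=
  hP.map_comp_equiv (Equiv.addRight z)

lemma closedCount_add (ω : ConfigD d) (s : ℕ → Fin d) (m n : ℕ) :
    closedCount ω s (m + n) = closedCount ω s m +
      closedCount (seenFrom (pathPos s m) ω) (fun i => s (m + i)) n := by
  rw [closedCount, closedCount, closedCount, Finset.sum_range_add]
  congr 1
  refine Finset.sum_congr rfl fun i _ => ?_
  rw [add_assoc, pathPos_add, seenFrom]

lemma closedCount_le (ω : ConfigD d) (s : ℕ → Fin d) (n : ℕ) : closedCount ω s n ≤ n := by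
  refine (Finset.sum_le_card_nsmul _ _ 1 fun i _ => ?_).trans (by simp)
  split_ifs <;> simp

lemma closedCount_mono (ω : ConfigD d) (s : ℕ → Fin d) : Monotone (closedCount ω s) :=
  fun m n h => by
    obtain ⟨k, rfl⟩ := Nat.exists_eq_add_of_le h
    rw [closedCount_add]
    exact Nat.le_add_right _ _

lemma measurable_closedCount (s : ℕ → Fin d) (n : ℕ) :
    Measurable fun ω : ConfigD d => closedCount ω s n :=
  Finset.measurable_fun_sum _ fun i _ =>
    (measurable_of_countable fun b : Bool => if b then 0 else 1).comp
      (measurable_pi_apply (pathPos s (i + 1)))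

lemma dependsOn_closedCount (s : ℕ → Fin d) (n : ℕ) :
    DependsOn (fun ω : ConfigD d => closedCount ω s n) {x | siteLevel x ∈ Finset.Icc 1 (n : ℤ)} :=
  fun ω ω' h => Finset.sum_congr rfl fun i hi => by
    have := Finset.mem_range.1 hi
    rw [h _ (by
      simp only [Set.mem_ofPred_eq, siteLevel_pathPos, Finset.mem_Icc]
      push_cast
      omega)]

lemma closedCount_le_add_one {ω ω' : ConfigD d} {k : ℤ}
    (h : ∀ x, siteLevel x ≠ k → ω x = ω' x) (s : ℕ → Fin d) (n : ℕ) :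
    closedCount ω s n ≤ closedCount ω' s n + 1 := by
  have hle : closedCount ω s n ≤
      ∑ i ∈ Finset.range n, ((if ω' (pathPos s (i + 1)) then 0 else 1) +
        if i = (k - 1).toNat then 1 else 0) := by
    refine Finset.sum_le_sum fun i _ => ?_
    by_cases hi : i = (k - 1).toNat
    · simp only [hi, if_true]
      split_ifs <;> simp
    · rw [h _ (by rw [siteLevel_pathPos]; push_cast; omega)]
      simp
  rw [Finset.sum_add_distrib, Finset.sum_ite_eq'] at hle
  refine hle.trans (Nat.add_le_add_left ?_ _)
  split_ifs <;> simp

lemma Ymax_eq (n : ℕ) (ω : ConfigD d) :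
    Ymax d n ω = sSup (Set.range fun s : ℕ → Fin d => closedCount ω s n) := by
  unfold Ymax
  congr 1
  ext r
  constructor
  · rintro ⟨x, hx, rfl⟩
    obtain ⟨s, rfl⟩ := hx.exists_eq_pathPos
    exact ⟨s, closedCount_eq_sum_Icc ω s n⟩
  · rintro ⟨s, rfl⟩
    exact ⟨pathPos s, isOrientedPath_pathPos s, closedCount_eq_sum_Icc ω s n⟩

lemma closedCount_le_Ymax (ω : ConfigD d) (s : ℕ → Fin d) (n : ℕ) :
    closedCount ω s n ≤ Ymax d n ω := by
  rw [Ymax_eq]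
  exact le_csSup ⟨n, by rintro _ ⟨t, rfl⟩; exact closedCount_le ω t n⟩ ⟨s, rfl⟩

lemma dependsOn_Ymax (n : ℕ) :
    DependsOn (Ymax d n) {x | siteLevel x ∈ Finset.Icc 1 (n : ℤ)} := fun ω ω' h => by
  rw [Ymax_eq, Ymax_eq]
  congr 2
  exact funext fun s => dependsOn_closedCount s n h

variable [NeZero d]

lemma exists_closedCount_eq_Ymax (n : ℕ) (ω : ConfigD d) :
    ∃ s : ℕ → Fin d, closedCount ω s n = Ymax d n ω := by
  rw [Ymax_eq]
  exact Nat.sSup_mem (Set.range_nonempty _)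
    ⟨n, by rintro _ ⟨t, rfl⟩; exact closedCount_le ω t n⟩

lemma Ymax_le (n : ℕ) (ω : ConfigD d) : Ymax d n ω ≤ n := by
  obtain ⟨s, hs⟩ := exists_closedCount_eq_Ymax n ω
  exact hs ▸ closedCount_le ω s n

lemma Ymax_add_le (m n : ℕ) (ω : ConfigD d) : Ymax d (m + n) ω ≤ Ymax d m ω + n := by
  obtain ⟨s, hs⟩ := exists_closedCount_eq_Ymax (m + n) ω
  rw [← hs, closedCount_add]
  exact add_le_add (closedCount_le_Ymax ω s m) (closedCount_le _ _ _)

lemma abs_Ymax_sub_le_one {ω ω' : ConfigD d} {k : ℤ}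
    (h : ∀ x, siteLevel x ≠ k → ω x = ω' x) (n : ℕ) :
    |(Ymax d n ω : ℝ) - Ymax d n ω'| ≤ 1 := by
  have key : ∀ {ω ω' : ConfigD d}, (∀ x, siteLevel x ≠ k → ω x = ω' x) →
      (Ymax d n ω : ℝ) ≤ Ymax d n ω' + 1 := fun {ω ω'} h => by
    obtain ⟨s, hs⟩ := exists_closedCount_eq_Ymax n ω
    rw [← hs]
    exact_mod_cast (closedCount_le_add_one h s n).trans
      (Nat.add_le_add_right (closedCount_le_Ymax ω' s n) 1)
  rw [abs_le]
  have h₁ := key h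
  have h₂ := key fun x hx => (h x hx).symm
  constructor <;> linarith

/-- The extension of a finite sequence of steps by zero. -/
def extendSteps {m : ℕ} (t : Fin m → Fin d) : ℕ → Fin d :=
  fun i => if h : i < m then t ⟨i, h⟩ else 0

lemma closedCount_extendSteps (ω : ConfigD d) (s : ℕ → Fin d) (m : ℕ) :
    closedCount ω (extendSteps fun i : Fin m => s i) m = closedCount ω s m :=
  closedCount_congr ω fun i hi => by simp [extendSteps, hi]

/-- A maximizer of a function on a finite type. -/
noncomputable def argmax {α : Type*} [Finite α] [Nonempty α] (c : α → ℕ) : α :=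
  (Finite.exists_max c).choose

lemma le_argmax {α : Type*} [Finite α] [Nonempty α] (c : α → ℕ) (a : α) : c a ≤ c (argmax c) :=
  (Finite.exists_max c).choose_spec a

/-- The first `m` steps of an optimal path, chosen as a function of the closed-site counts. -/
noncomputable def optSteps (m : ℕ) (ω : ConfigD d) : Fin m → Fin d :=
  argmax fun t => closedCount ω (extendSteps t) m

lemma measurable_optSteps (m : ℕ) : Measurable (optSteps (d := d) m) :=
  (measurable_of_countable argmax).comp
    (measurable_pi_lambda _ fun t => measurable_closedCount (extendSteps t) m)

lemma dependsOn_optSteps (m : ℕ) :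
    DependsOn (optSteps (d := d) m) {x | siteLevel x ∈ Finset.Icc 1 (m : ℤ)} :=
  fun _ _ h => congrArg argmax (funext fun t => dependsOn_closedCount (extendSteps t) m h)

lemma closedCount_optSteps (m : ℕ) (ω : ConfigD d) :
    closedCount ω (extendSteps (optSteps m ω)) m = Ymax d m ω := by
  refine (closedCount_le_Ymax _ _ _).antisymm ?_
  obtain ⟨s, hs⟩ := exists_closedCount_eq_Ymax m ω
  rw [← hs, ← closedCount_extendSteps]
  exact le_argmax (fun t => closedCount ω (extendSteps t) m) _

lemma measurable_Ymax (n : ℕ) : Measurable (Ymax d n) := by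
  have h : Ymax d n = (fun c : (Fin n → Fin d) → ℕ => c (argmax c)) ∘
      fun ω t => closedCount ω (extendSteps t) n := by
    funext ω
    exact (closedCount_optSteps n ω).symm
  rw [h]
  exact (measurable_of_countable _).comp
    (measurable_pi_lambda _ fun t => measurable_closedCount (extendSteps t) n)

/-- The configuration seen from the endpoint of the selected optimal path of length `m`. -/
noncomputable def greedyShift (m : ℕ) (ω : ConfigD d) : ConfigD d :=
  seenFrom (pathPos (extendSteps (optSteps m ω)) m) ω

lemma measurable_greedyShift (m : ℕ) : Measurable (greedyShift (d := d) m) := by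
  have h : Measurable fun w : (Fin m → Fin d) × ConfigD d =>
      seenFrom (pathPos (extendSteps w.1) m) w.2 :=
    measurable_from_prod_countable_right fun t =>
      measurable_seenFrom (pathPos (extendSteps t) m)
  exact h.comp ((measurable_optSteps m).prodMk measurable_id)

lemma DependsOn.comp_greedyShift {β : Type*} {f : ConfigD d → β} {m : ℕ}
    (hf : DependsOn f {x | 1 ≤ siteLevel x}) :
    DependsOn (f ∘ greedyShift m) {x | 1 ≤ siteLevel x} := fun ω ω' h => by
  refine hf fun x hx => ?_
  have hopt : optSteps m ω = optSteps m ω' := dependsOn_optSteps m fun y hy =>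
    h y (Finset.mem_Icc.1 (Set.mem_ofPred_eq ▸ hy)).1
  simp only [greedyShift, seenFrom]
  rw [hopt]
  refine h _ ?_
  simp only [Set.mem_ofPred_eq, siteLevel_add, siteLevel_pathPos] at hx ⊢
  omega

lemma IsBernoulli.measure_inter_greedyShift {p : ℝ} {P : Measure (ConfigD d)}
    (hP : IsBernoulli p P) {m : ℕ} {A B : Set (ConfigD d)} (hA : MeasurableSet A)
    (hB : MeasurableSet B) (hAm : DependsOn (fun ω => ω ∈ A) {x | siteLevel x ≤ m})
    (hB₀ : DependsOn (fun ω => ω ∈ B) {x | 1 ≤ siteLevel x}) :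
    P (A ∩ greedyShift m ⁻¹' B) = P A * P B := by
  have hms : ∀ t, MeasurableSet (optSteps (d := d) m ⁻¹' {t}) := fun t =>
    measurable_optSteps m (measurableSet_singleton t)
  have hsum : ∀ C : Set (ConfigD d), MeasurableSet C →
      P C = ∑ t, P (C ∩ optSteps m ⁻¹' {t}) := fun C hC => by
    rw [← tsum_fintype (L := .unconditional _), ← measure_iUnion]
    · congr 1
      ext ω
      simp
    · intro t t' htt
      refine Set.disjoint_left.2 fun ω h h' => htt ?_
      exact h.2.symm.trans h'.2
    · exact fun t => hC.inter (hms t)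
  rw [hsum _ (hA.inter (measurable_greedyShift m hB)), hsum A hA, Finset.sum_mul]
  refine Finset.sum_congr rfl fun t _ => ?_
  set z := pathPos (extendSteps t) m
  have hset : A ∩ greedyShift m ⁻¹' B ∩ optSteps m ⁻¹' {t} =
      A ∩ optSteps m ⁻¹' {t} ∩ seenFrom z ⁻¹' B := by
    ext ω
    simp only [Set.mem_inter_iff, Set.mem_preimage, Set.mem_singleton_iff, greedyShift]
    constructor
    · rintro ⟨⟨h₁, h₂⟩, rfl⟩; exact ⟨⟨h₁, rfl⟩, h₂⟩
    · rintro ⟨⟨h₁, rfl⟩, h₂⟩; exact ⟨⟨h₁, h₂⟩, rfl⟩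
  rw [hset, hP.measure_inter (S := {x | siteLevel x ≤ m}) (hA.inter (hms t))
    (measurable_seenFrom z hB), ← Measure.map_apply (measurable_seenFrom z) hB,
    hP.map_seenFrom]
  · intro ω ω' h
    have h₁ : (ω ∈ A) = (ω' ∈ A) := hAm h
    have h₂ : optSteps m ω = optSteps m ω' := dependsOn_optSteps m fun x hx =>
      h x (Finset.mem_Icc.1 (Set.mem_ofPred_eq ▸ hx)).2
    simp [h₁, h₂]
  · intro ω ω' h
    refine hB₀ (x := seenFrom z ω) (y := seenFrom z ω') fun x hx => h _ ?_
    simp only [Set.mem_ofPred_eq, Set.mem_compl_iff, siteLevel_add, z, siteLevel_pathPos]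
      at hx ⊢
    omega

/-- The steps of the path obtained by concatenating selected optimal paths of length `m`. -/
noncomputable def greedySteps (m : ℕ) (ω : ConfigD d) (n : ℕ) : Fin d :=
  extendSteps (optSteps m ((greedyShift m)^[n / m] ω)) (n % m)

lemma closedCount_greedySteps {m : ℕ} (hm : 0 < m) (K : ℕ) (ω : ConfigD d) :
    closedCount ω (greedySteps m ω) (m * K) =
      ∑ k ∈ Finset.range K, Ymax d m ((greedyShift m)^[k] ω) := by
  induction K generalizing ω with
  | zero => simp [closedCount]
  | succ K ih =>
    have hfirst : ∀ i < m, greedySteps m ω i = extendSteps (optSteps m ω) i := fun i hi => by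
      simp [greedySteps, Nat.div_eq_of_lt hi, Nat.mod_eq_of_lt hi]
    have hrest : (fun i => greedySteps m ω (m + i)) = greedySteps m (greedyShift m ω) := by
      funext i
      simp [greedySteps, Nat.add_div_left i hm]
    rw [Nat.mul_succ, add_comm, closedCount_add, hrest, pathPos_congr hfirst,
      closedCount_congr ω hfirst, closedCount_optSteps, Finset.sum_range_succ', add_comm]
    congr 1
    exact ih (greedyShift m ω)

end Paths

section Limits

variable {d : ℕ} {p : ℝ} {P : Measure (ConfigD d)}

lemma dependsOn_Ymax_of_pos (m : ℕ) : DependsOn (Ymax d m) {x | 1 ≤ siteLevel x} :=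
  fun _ _ h => dependsOn_Ymax m fun x hx =>
    h x (Finset.mem_Icc.1 (Set.mem_ofPred_eq ▸ hx)).1

lemma closedCount_div_mem (ω : ConfigD d) (s : ℕ → Fin d) (n : ℕ) :
    (closedCount ω s n : ℝ) / n ∈ Set.Icc (0 : ℝ) 1 :=
  ⟨by positivity, div_le_one_of_le₀ (by exact_mod_cast closedCount_le ω s n) n.cast_nonneg⟩

lemma mem_RhoPerc_iff_s18 {ω : ConfigD d} {ρ : ℝ} :
    ω ∈ RhoPerc ρ ↔ ∃ s : ℕ → Fin d,
      ρ ≤ atTop.liminf fun n : ℕ => (closedCount ω s n : ℝ) / n := by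
  simp only [cast_closedCount]
  constructor
  · rintro ⟨x, hx, h⟩
    obtain ⟨s, rfl⟩ := hx.exists_eq_pathPos
    exact ⟨s, h⟩
  · rintro ⟨s, h⟩
    exact ⟨pathPos s, isOrientedPath_pathPos s, h⟩

lemma le_of_mem_RhoPerc {ω : ConfigD d} {ρ γ : ℝ} (hω : ω ∈ RhoPerc ρ)
    (h : Tendsto (fun n : ℕ => (Ymax d n ω : ℝ) / n) atTop (nhds γ)) : ρ ≤ γ := by
  obtain ⟨s, hs⟩ := mem_RhoPerc_iff_s18.1 hω
  rw [← h.liminf_eq]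
  refine hs.trans (liminf_le_liminf (Eventually.of_forall fun n => ?_) ?_ ?_)
  · gcongr
    exact closedCount_le_Ymax ω s n
  · exact isBoundedUnder_of ⟨0, fun n => (closedCount_div_mem ω s n).1⟩
  · exact h.isBoundedUnder_le.isCoboundedUnder_ge

lemma mem_RhoPerc_of_eventually_le {ω : ConfigD d} {ρ : ℝ} {s : ℕ → Fin d}
    (h : ∀ᶠ n : ℕ in atTop, ρ ≤ (closedCount ω s n : ℝ) / n) : ω ∈ RhoPerc ρ :=
  mem_RhoPerc_iff_s18.2 ⟨s, le_liminf_of_le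
    (isBoundedUnder_of ⟨1, fun n => (closedCount_div_mem ω s n).2⟩).isCoboundedUnder_ge h⟩

variable [NeZero d]

lemma DependsOn.comp_greedyShift_iterate {β : Type*} {f : ConfigD d → β} {m : ℕ}
    (hf : DependsOn f {x | 1 ≤ siteLevel x}) (k : ℕ) :
    DependsOn (f ∘ (greedyShift m)^[k]) {x | 1 ≤ siteLevel x} := by
  induction k with
  | zero => exact hf
  | succ k ih =>
    rw [Function.iterate_succ, ← Function.comp_assoc]
    exact ih.comp_greedyShift

lemma IsBernoulli.measure_preimage_iterate (hP : IsBernoulli p P) (m k : ℕ)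
    {B : Set (ConfigD d)} (hB : MeasurableSet B)
    (hB₀ : DependsOn (fun ω => ω ∈ B) {x | 1 ≤ siteLevel x}) :
    P ((greedyShift m)^[k] ⁻¹' B) = P B := by
  have := hP.1
  induction k with
  | zero => simp
  | succ k ih =>
    have h := hP.measure_inter_greedyShift (m := m) MeasurableSet.univ
      ((measurable_greedyShift m).iterate k hB) (fun _ _ _ => by simp)
      (hB₀.comp_greedyShift_iterate k)
    rw [Function.iterate_succ, Set.preimage_comp, ← ih]
    simpa using h

lemma IsBernoulli.ae_tendsto_greedy_average (hP : IsBernoulli p P) (m : ℕ) :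
    ∀ᵐ ω ∂P, Tendsto
      (fun K : ℕ => (∑ k ∈ Finset.range K, (Ymax d m ((greedyShift m)^[k] ω) : ℝ)) / K)
      atTop (nhds (∫ ω, (Ymax d m ω : ℝ) ∂P)) := by
  have := hP.1
  have hY : Measurable fun ω : ConfigD d => (Ymax d m ω : ℝ) :=
    measurable_from_top.comp (measurable_Ymax m)
  have hT : ∀ k, Measurable (greedyShift (d := d) m)^[k] := fun k =>
    (measurable_greedyShift m).iterate k
  set X : ℕ → ConfigD d → ℝ := fun k ω => (Ymax d m ((greedyShift m)^[k] ω) : ℝ)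
  have hX_meas : ∀ k, Measurable (X k) := fun k => hY.comp (hT k)
  have hdep : ∀ (s : Set ℝ), DependsOn (fun ω : ConfigD d => ω ∈ (X 0 ⁻¹' s))
      {x | 1 ≤ siteLevel x} := fun s ω ω' h => by
    simp only [X, Set.mem_preimage, Function.iterate_zero, id]
    rw [dependsOn_Ymax_of_pos m h]
  have hlaw : ∀ k (s : Set ℝ), MeasurableSet s → P (X k ⁻¹' s) = P (X 0 ⁻¹' s) :=
    fun k s hs => hP.measure_preimage_iterate m k (hX_meas 0 hs) (hdep s)
  have hlt : ∀ i j, i < j → ProbabilityTheory.IndepFun (X i) (X j) P := fun i j hij => by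
    obtain ⟨k, rfl⟩ := Nat.exists_eq_add_of_lt hij
    rw [ProbabilityTheory.indepFun_iff_measure_inter_preimage_eq_mul]
    intro s t hs ht
    have hset : X i ⁻¹' s ∩ X (i + k + 1) ⁻¹' t =
        (greedyShift m)^[i] ⁻¹' (X 0 ⁻¹' s ∩
          greedyShift m ⁻¹' ((greedyShift m)^[k] ⁻¹' (X 0 ⁻¹' t))) := by
      ext ω
      have : i + k + 1 = k + 1 + i := by omega
      simp only [X, Set.mem_inter_iff, Set.mem_preimage, Function.iterate_zero, id, this,
        Function.iterate_add_apply, Function.iterate_one]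
    have hC : MeasurableSet ((greedyShift m)^[k] ⁻¹' (X 0 ⁻¹' t)) := hT k (hX_meas 0 ht)
    have hC₀ := (hdep t).comp_greedyShift_iterate (m := m) k
    rw [hset, hP.measure_preimage_iterate m i
        ((hX_meas 0 hs).inter (measurable_greedyShift m hC)) (fun ω ω' h => ?_),
      hP.measure_inter_greedyShift (hX_meas 0 hs) hC (fun ω ω' h => ?_) hC₀,
      hP.measure_preimage_iterate m k (hX_meas 0 ht) (hdep t), hlaw i s hs,
      hlaw (i + k + 1) t ht]
    · simp only [X, Set.mem_preimage, Function.iterate_zero, id]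
      rw [dependsOn_Ymax m fun x hx => h x (Finset.mem_Icc.1 (Set.mem_ofPred_eq ▸ hx)).2]
    · have h₁ : (ω ∈ X 0 ⁻¹' s) = (ω' ∈ X 0 ⁻¹' s) := hdep s h
      have h₂ : (greedyShift m ω ∈ (greedyShift m)^[k] ⁻¹' (X 0 ⁻¹' t)) =
        (greedyShift m ω' ∈ (greedyShift m)^[k] ⁻¹' (X 0 ⁻¹' t)) := hC₀.comp_greedyShift h
      exact congrArg₂ And h₁ h₂
  refine ProbabilityTheory.strong_law_ae_real X ?_ ?_ ?_
  · refine integrable_of_abs_le (C := m) (hX_meas 0) fun ω => ?_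
    rw [Nat.abs_cast]
    exact_mod_cast Ymax_le m _
  · intro i j hij
    rcases lt_or_gt_of_ne hij with h | h
    · exact hlt i j h
    · exact (hlt j i h).symm
  · intro i
    refine ⟨(hX_meas i).aemeasurable, (hX_meas 0).aemeasurable, ?_⟩
    ext s hs
    rw [Measure.map_apply (hX_meas i) hs, Measure.map_apply (hX_meas 0) hs, hlaw i s hs]

lemma IsBernoulli.ae_exists_le_closedCount (hP : IsBernoulli p P) {m : ℕ} (hm : 0 < m) {ρ : ℝ}
    (hρ : ρ < (∫ ω, (Ymax d m ω : ℝ) ∂P) / m) :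
    ∀ᵐ ω ∂P, ∃ s : ℕ → Fin d, ∀ᶠ n : ℕ in atTop, ρ ≤ (closedCount ω s n : ℝ) / n := by
  filter_upwards [hP.ae_tendsto_greedy_average m] with ω hω
  refine ⟨greedySteps m ω, ?_⟩
  have hratio : Tendsto (fun n : ℕ => ((n / m : ℕ) : ℝ) / n) atTop (nhds (m : ℝ)⁻¹) := by
    have h := (tendsto_nat_floor_mul_div_atTop (R := ℝ) (a := (m : ℝ)⁻¹) (by positivity)).comp
      tendsto_natCast_atTop_atTop
    refine h.congr fun n => ?_
    simp only [Function.comp_apply]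
    rw [inv_mul_eq_div, Nat.floor_div_natCast, Nat.floor_natCast]
  have hlim := (hω.comp (Nat.tendsto_div_const_atTop hm.ne')).mul hratio
  rw [← div_eq_mul_inv] at hlim
  filter_upwards [hlim.eventually_const_lt hρ] with n hn
  refine hn.le.trans ?_
  have hcount : ((∑ k ∈ Finset.range (n / m), Ymax d m ((greedyShift m)^[k] ω) : ℕ) : ℝ) ≤
      closedCount ω (greedySteps m ω) n := by
    rw [← closedCount_greedySteps hm]
    exact_mod_cast closedCount_mono ω _ (Nat.mul_div_le n m)
  push_cast at hcount
  rcases Nat.eq_zero_or_pos (n / m) with h0 | h0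
  · simp only [Function.comp_apply, h0]
    simpa using div_nonneg (Nat.cast_nonneg (closedCount ω (greedySteps m ω) n))
      n.cast_nonneg
  · have : ((n / m : ℕ) : ℝ) ≠ 0 := by positivity
    simp only [Function.comp_apply]
    rw [div_mul_div_cancel₀ this]
    gcongr

lemma IsBernoulli.integral_sq_Ymax_sub_le (hP : IsBernoulli p P) (n : ℕ) :
    ∫ ω, ((Ymax d n ω : ℝ) - ∫ ω', (Ymax d n ω' : ℝ) ∂P) ^ 2 ∂P ≤ n := by
  have h := hP.integral_sq_sub_le siteLevel (Finset.Icc 1 (n : ℤ))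
    (fun ω => (Ymax d n ω : ℝ)) n (measurable_from_top.comp (measurable_Ymax n))
    (fun ω => by rw [Nat.abs_cast]; exact_mod_cast Ymax_le n ω)
    (fun ω ω' h => congrArg _ (dependsOn_Ymax n h))
    (fun k _ ω ω' h => abs_Ymax_sub_le_one h n)
  simpa using h

lemma IsBernoulli.ae_tendsto_Ymax_sq (hP : IsBernoulli p P) :
    ∀ᵐ ω ∂P, Tendsto (fun k : ℕ => ((Ymax d (k ^ 2) ω : ℝ) -
      ∫ ω', (Ymax d (k ^ 2) ω' : ℝ) ∂P) / (k ^ 2 : ℕ)) atTop (nhds 0) := by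
  have := hP.1
  set Z : ℕ → ConfigD d → ℝ := fun k ω => ((Ymax d (k ^ 2) ω : ℝ) -
      ∫ ω', (Ymax d (k ^ 2) ω' : ℝ) ∂P) / (k ^ 2 : ℕ)
  have hY : ∀ n, Measurable fun ω : ConfigD d => (Ymax d n ω : ℝ) := fun n =>
    measurable_from_top.comp (measurable_Ymax n)
  have hZ : ∀ k, Measurable (Z k) := fun k => ((hY _).sub_const _).div_const _
  have hbound : ∀ k, ∫⁻ ω, ENNReal.ofReal (Z k ω ^ 2) ∂P ≤
      ENNReal.ofReal (1 / (k : ℝ) ^ 2) := fun k => by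
    have hint : Integrable (fun ω => Z k ω ^ 2) P := by
      refine (MemLp.of_bound (p := 2) (hZ k).aestronglyMeasurable
        (((k ^ 2 : ℕ) + |∫ ω', (Ymax d (k ^ 2) ω' : ℝ) ∂P|) / (k ^ 2 : ℕ))
        (ae_of_all _ fun ω => ?_)).integrable_sq
      simp only [Z, Real.norm_eq_abs, abs_div, Nat.abs_cast]
      gcongr
      refine (abs_sub _ _).trans (add_le_add ?_ le_rfl)
      rw [Nat.abs_cast]
      exact_mod_cast Ymax_le _ ω
    rw [← ofReal_integral_eq_lintegral_ofReal hint (ae_of_all _ fun ω => sq_nonneg _)]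
    refine ENNReal.ofReal_le_ofReal ?_
    simp only [Z, div_pow, integral_div]
    calc _ ≤ ((k ^ 2 : ℕ) : ℝ) / ((k ^ 2 : ℕ) : ℝ) ^ 2 := by
            gcongr; exact hP.integral_sq_Ymax_sub_le _
      _ = 1 / (k : ℝ) ^ 2 := by
        push_cast
        rcases eq_or_ne (k : ℝ) 0 with h | h
        · simp [h]
        · field_simp
  have hfin : ∫⁻ ω, ∑' k, ENNReal.ofReal (Z k ω ^ 2) ∂P ≠ ∞ := by
    rw [lintegral_tsum fun k => ((hZ k).pow_const 2).ennreal_ofReal.aemeasurable]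
    refine ne_top_of_le_ne_top ?_ (ENNReal.tsum_le_tsum hbound)
    exact (Real.summable_one_div_nat_pow.2 one_lt_two).tsum_ofReal_ne_top
  filter_upwards [ae_lt_top (Measurable.tsum fun k =>
    ((hZ k).pow_const 2).ennreal_ofReal) hfin] with ω hω
  have h := (ENNReal.tendsto_toReal ENNReal.zero_ne_top).comp
    (ENNReal.tendsto_atTop_zero_of_tsum_ne_top hω.ne)
  have h' : Tendsto (fun k => Z k ω ^ 2) atTop (nhds 0) :=
    h.congr fun k => ENNReal.toReal_ofReal (sq_nonneg _)
  have h'' := h'.sqrt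
  simp only [Real.sqrt_sq_eq_abs, Real.sqrt_zero] at h''
  exact (tendsto_zero_iff_abs_tendsto_zero _).2 h''

/-- The supremum of the normalized expected values of `Ymax`. -/
noncomputable def meanSup (P : Measure (ConfigD d)) : ℝ :=
  ⨆ m : ℕ, (∫ ω, (Ymax d (m + 1) ω : ℝ) ∂P) / (m + 1 : ℕ)

lemma Ymax_div_le_one (n : ℕ) (ω : ConfigD d) : (Ymax d n ω : ℝ) / n ≤ 1 :=
  div_le_one_of_le₀ (by exact_mod_cast Ymax_le n ω) (Nat.cast_nonneg n)

lemma integral_Ymax_div_le_meanSup [IsProbabilityMeasure P] {m : ℕ} (hm : 0 < m) :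
    (∫ ω, (Ymax d m ω : ℝ) ∂P) / m ≤ meanSup P := by
  have hbdd : BddAbove (Set.range fun m : ℕ =>
      (∫ ω, (Ymax d (m + 1) ω : ℝ) ∂P) / (m + 1 : ℕ)) := by
    refine ⟨1, ?_⟩
    rintro _ ⟨m, rfl⟩
    simp only [← integral_div]
    have := integral_mono_of_nonneg (μ := P)
      (f := fun ω => (Ymax d (m + 1) ω : ℝ) / (m + 1 : ℕ)) (g := fun _ => 1)
      (ae_of_all _ fun ω => by positivity) (integrable_const _)
      (ae_of_all _ fun ω => Ymax_div_le_one (m + 1) ω)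
    simpa using this
  obtain ⟨k, rfl⟩ := Nat.exists_eq_add_of_lt hm
  rw [zero_add]
  exact le_ciSup hbdd k

lemma IsBernoulli.ae_exists_le_closedCount_of_lt_meanSup (hP : IsBernoulli p P) {ρ : ℝ}
    (hρ : ρ < meanSup P) :
    ∀ᵐ ω ∂P, ∃ s : ℕ → Fin d, ∀ᶠ n : ℕ in atTop, ρ ≤ (closedCount ω s n : ℝ) / n := by
  obtain ⟨m, hm⟩ := exists_lt_of_lt_ciSup hρ
  exact hP.ae_exists_le_closedCount m.succ_pos hm

lemma IsBernoulli.ae_eventually_Ymax_lt (hP : IsBernoulli p P) :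
    ∀ᵐ ω ∂P, ∀ b, meanSup P < b → ∀ᶠ n : ℕ in atTop, (Ymax d n ω : ℝ) / n < b := by
  have := hP.1
  filter_upwards [hP.ae_tendsto_Ymax_sq] with ω hω b hb
  have hsqrt : Tendsto Nat.sqrt atTop atTop :=
    tendsto_atTop_atTop.2 fun k => ⟨k * k, fun n hn => Nat.le_sqrt.2 hn⟩
  have hlim : Tendsto (fun k : ℕ => ((Ymax d (k ^ 2) ω : ℝ) -
      ∫ ω', (Ymax d (k ^ 2) ω' : ℝ) ∂P) / (k ^ 2 : ℕ) + 2 / (k : ℝ)) atTop (nhds 0) := by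
    simpa using hω.add (tendsto_const_div_atTop_nhds_zero_nat 2)
  filter_upwards [hsqrt.eventually (hlim.eventually_lt_const (sub_pos.2 hb)),
    hsqrt.eventually (eventually_gt_atTop 0)] with n hn hpos
  set k := Nat.sqrt n
  have hkn : k ^ 2 ≤ n := Nat.sqrt_le' n
  have hnk : n - k ^ 2 ≤ 2 * k := by
    have : n ≤ k * k + k + k := Nat.sqrt_le_add n
    rw [sq]
    omega
  have hY : (Ymax d n ω : ℝ) ≤ Ymax d (k ^ 2) ω + 2 * k := by
    have h := Ymax_add_le (k ^ 2) (n - k ^ 2) ω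
    rw [Nat.add_sub_cancel' hkn] at h
    exact_mod_cast h.trans (Nat.add_le_add_left hnk _)
  have hk : (0 : ℝ) < k := by exact_mod_cast hpos
  have hmean := integral_Ymax_div_le_meanSup (P := P) (pow_pos hpos 2)
  have hkn' : ((k ^ 2 : ℕ) : ℝ) ≤ n := by exact_mod_cast hkn
  have hk2 : (0 : ℝ) < (k ^ 2 : ℕ) := by exact_mod_cast pow_pos hpos 2
  have hle : (Ymax d n ω : ℝ) / n ≤ (Ymax d (k ^ 2) ω : ℝ) / (k ^ 2 : ℕ) + 2 / k := by
    calc (Ymax d n ω : ℝ) / n ≤ (Ymax d (k ^ 2) ω + 2 * k) / (k ^ 2 : ℕ) := by gcongr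
      _ = _ := by
        rw [add_div]
        congr 1
        push_cast
        field_simp
  rw [sub_div] at hn
  linarith

lemma IsBernoulli.ae_tendsto_Ymax_div (hP : IsBernoulli p P) :
    ∀ᵐ ω ∂P, Tendsto (fun n : ℕ => (Ymax d n ω : ℝ) / n) atTop (nhds (meanSup P)) := by
  have hlow : ∀ᵐ ω ∂P, ∀ i : ℕ, ∀ᶠ n : ℕ in atTop,
      meanSup P - 1 / ((i : ℝ) + 1) ≤ (Ymax d n ω : ℝ) / n := by
    refine ae_all_iff.2 fun i => ?_
    filter_upwards [hP.ae_exists_le_closedCount_of_lt_meanSup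
      (sub_lt_self _ (Nat.one_div_pos_of_nat (n := i)))] with ω ⟨s, hs⟩
    filter_upwards [hs] with n hn
    refine hn.trans ?_
    gcongr
    exact closedCount_le_Ymax ω s n
  filter_upwards [hlow, hP.ae_eventually_Ymax_lt] with ω h₁ h₂
  refine tendsto_order.2 ⟨fun a ha => ?_, h₂⟩
  obtain ⟨i, hi⟩ := exists_nat_one_div_lt (sub_pos.2 ha)
  filter_upwards [h₁ i] with n hn
  linarith

lemma IsBernoulli.tendsto_integral_abs_sub (hP : IsBernoulli p P) {γ : ℝ}
    (h : ∀ᵐ ω ∂P, Tendsto (fun n : ℕ => (Ymax d n ω : ℝ) / n) atTop (nhds γ)) :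
    Tendsto (fun n : ℕ => ∫ ω, |(Ymax d n ω : ℝ) / n - γ| ∂P) atTop (nhds 0) := by
  have := hP.1
  have hY : ∀ n, Measurable fun ω : ConfigD d => (Ymax d n ω : ℝ) := fun n =>
    measurable_from_top.comp (measurable_Ymax n)
  have hlim := tendsto_integral_of_dominated_convergence (μ := P) (f := fun _ => 0)
    (F := fun n ω => |(Ymax d n ω : ℝ) / n - γ|) (fun _ => 1 + |γ|)
    (fun n => (((hY n).div_const _).sub_const γ).norm.aestronglyMeasurable)
    (integrable_const _) (fun n => ae_of_all _ fun ω => ?_) ?_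
  · simpa using hlim
  · rw [Real.norm_eq_abs, abs_abs]
    refine (abs_sub _ _).trans (add_le_add ?_ le_rfl)
    rw [abs_of_nonneg (by positivity)]
    exact Ymax_div_le_one n ω
  · filter_upwards [h] with ω hω
    simpa using (hω.sub_const γ).abs

lemma IsBernoulli.measure_RhoPerc_eq_one (hP : IsBernoulli p P) {ρ : ℝ} (hρ : ρ < meanSup P) :
    P (RhoPerc ρ) = 1 := by
  have := hP.1
  have hmem : ∀ᵐ ω ∂P, ω ∈ RhoPerc (d := d) ρ := by
    filter_upwards [hP.ae_exists_le_closedCount_of_lt_meanSup hρ] with ω ⟨s, hs⟩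
    exact mem_RhoPerc_of_eventually_le hs
  exact (measure_congr (eventuallyEq_univ.2 hmem)).trans measure_univ

lemma IsBernoulli.le_meanSup (hP : IsBernoulli p P) {ρ : ℝ} (hρ : P (RhoPerc ρ) = 1) :
    ρ ≤ meanSup P := by
  by_contra hlt
  have hnot : ∀ᵐ ω ∂P, ω ∉ RhoPerc (d := d) ρ := by
    filter_upwards [hP.ae_tendsto_Ymax_div] with ω hω hmem
    exact hlt (le_of_mem_RhoPerc hmem hω)
  exact zero_ne_one ((measure_eq_zero_iff_ae_notMem.2 hnot).symm.trans hρ)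

end Limits

/-- Under `P_{1−q}`, the normalized maximal number of closed sites on
oriented paths, `Y_{0,n}/n`, converges almost surely and in `L¹` to a deterministic
constant `γ(q)`, and `γ(q) = ρ_c(q)`. -/
theorem Ymax_limit_eq_rhoC
    {d : ℕ} (hd : 1 ≤ d) (q : ℝ) (hq : q ∈ Set.Ioo (0 : ℝ) 1)
    (P : ℝ → Measure (ConfigD d)) (hP : ∀ p ∈ Set.Icc (0 : ℝ) 1, IsBernoulli p (P p)) :
    ∃ γ : ℝ,
      (∀ᵐ ω ∂(P (1 - q)),
        Tendsto (fun n : ℕ => (Ymax d n ω : ℝ) / n) atTop (nhds γ)) ∧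
      Tendsto (fun n : ℕ => ∫ ω, |(Ymax d n ω : ℝ) / n - γ| ∂(P (1 - q))) atTop
        (nhds 0) ∧
      γ = rhoC P q := by
  have : NeZero d := ⟨by omega⟩
  have hB := hP (1 - q) ⟨by linarith [hq.2], by linarith [hq.1]⟩
  refine ⟨meanSup (P (1 - q)), hB.ae_tendsto_Ymax_div,
    hB.tendsto_integral_abs_sub hB.ae_tendsto_Ymax_div, ?_⟩
  refine (csSup_eq_of_forall_le_of_forall_lt_exists_gt
    ⟨meanSup (P (1 - q)) - 1, hB.measure_RhoPerc_eq_one (sub_one_lt _)⟩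
    (fun ρ hρ => hB.le_meanSup hρ) fun w hw => ?_).symm
  obtain ⟨ρ, hwρ, hρ⟩ := exists_between hw
  exact ⟨ρ, hB.measure_RhoPerc_eq_one hρ, hwρ⟩
end
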